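/- arXiv:1302.2261 — 6 statements merged into one kernel-verified Lean document; each statement's English description precedes it below -/
import Mathlib

section
/- There is an absolute constant C > 0 such that for every prime power q and every ε ∈ (0,1) the following holds: for every γ > 0 there exists n₀ such that for all integers n ≥ n₀, setting k = ⌊ε²n/(C·log q)⌋, a uniformly random k-dimensional linear subspace C of F_q^n (viewed as a code of length n over F_q) is ((1 − 1/q)(1 − ε), ⌈4/ε²⌉)-list decodable with probability at least 1 − γ. -/
/-!
A random code is generated by a matrix with `n` independent uniform rows `x j ∈ F^k`, so that the
`j`-th symbol of the codeword of a message `m` is `x j ⬝ᵥ m`. If `L` codewords lie within relative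
distance `(1 - 1/q)(1 - ε)` of a word `w`, then counting agreements with `w` coordinate by coordinate
shows that their list `t` of messages has total plurality
`∑ j, max_a #{m ∈ t : x j ⬝ᵥ m = a}` at least `n L (1/q + (1 - 1/q) ε)`
(`badRows_of_not_listDecodable`). It remains to bound the supremum over all lists `t`.

*Mean.* Distinct messages collide at a coordinate with probability `1/q`, so a second moment
computation bounds the mean plurality by `L/q + (1 - 1/q) ε L / 2` once `L ≥ 4/ε²`
(`expect_plurality_le`).

*Fluctuations.* A union bound over the lists would be too expensive. Instead the exponential moment
of the supremum is treated one coordinate at a time (`tensorize`): symmetrization (`symmetrize`)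
introduces a random sign, and a contraction principle for the maximum (`contraction`) replaces the
signed plurality by `∑ a, σ a * #{m ∈ t : x j ⬝ᵥ m = a} = ∑ m ∈ t, σ (x j ⬝ᵥ m)` with independent
signs `σ a`. The resulting process is linear in `t`, hence is at most `L` times its maximum over
single messages, and a union bound over only `q^k` messages suffices (`moment_bound`). Markov's
inequality gives failure probability at most `q^k exp(-ε² n / 128)` (`card_badRows_le`).

*Subspaces.* Every `k`-dimensional subspace is the image of equally many injective encodings, and
at least half of all matrices are injective, so the bound transfers to uniformly random subspaces
at the cost of a factor `2` (`good_ratio`). The constant is `C = 256`.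
-/

open Finset
open scoped BigOperators Classical

noncomputable section

/-- The relative Hamming distance between two words of length `n`. -/
def relDist {n : ℕ} {α : Type*} [DecidableEq α] (x y : Fin n → α) : ℝ :=
  (hammingDist x y : ℝ) / n

/-- A set code `C ⊆ F^n` is `(ρ, L)`-list decodable: every received word `w` has at most `L`
codewords within relative Hamming distance `ρ`. -/
def listDecodableSet {n : ℕ} {F : Type*} [DecidableEq F]
    (C : Set (Fin n → F)) (ρ : ℝ) (L : ℕ) : Prop :=
  ∀ w : Fin n → F, Nat.card {c : Fin n → F // c ∈ C ∧ relDist c w ≤ ρ} ≤ L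

/-! ### Exponential moments of suprema of sums of independent terms -/

/-- `max_t exp (A t)`, for a finite index type. -/
def maxExp {T : Type*} (A : T → ℝ) : ℝ := ⨆ t, Real.exp (A t)

lemma le_maxExp {T : Type*} [Finite T] (A : T → ℝ) (t : T) : Real.exp (A t) ≤ maxExp A :=
  le_ciSup (f := fun t => Real.exp (A t)) (Set.finite_range _).bddAbove t

lemma maxExp_le {T : Type*} [Nonempty T] {A : T → ℝ} {c : ℝ}
    (h : ∀ t, Real.exp (A t) ≤ c) : maxExp A ≤ c :=
  ciSup_le h

lemma exists_maxExp_eq {T : Type*} [Finite T] [Nonempty T] (A : T → ℝ) :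
    ∃ t, maxExp A = Real.exp (A t) := by
  obtain ⟨t, ht⟩ := exists_eq_ciSup_of_finite (f := fun t => Real.exp (A t))
  exact ⟨t, ht.symm⟩

lemma maxExp_mono {T : Type*} [Finite T] [Nonempty T] {A B : T → ℝ} (h : ∀ t, A t ≤ B t) :
    maxExp A ≤ maxExp B :=
  maxExp_le fun t => (Real.exp_le_exp.2 (h t)).trans (le_maxExp B t)

/-- Jensen's inequality, from the tangent line of `exp` at the mean. -/
lemma exp_expect_le {S : Type*} [Fintype S] [Nonempty S] (f : S → ℝ) :
    Real.exp (𝔼 s, f s) ≤ 𝔼 s, Real.exp (f s) := by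
  set μ := 𝔼 s, f s with hμ
  have h : 𝔼 s, Real.exp μ * (1 + (f s - μ)) ≤ 𝔼 s, Real.exp (f s) := by
    refine Finset.expect_le_expect fun s _ => ?_
    have h1 := Real.add_one_le_exp (f s - μ)
    calc Real.exp μ * (1 + (f s - μ)) ≤ Real.exp μ * Real.exp (f s - μ) := by
          gcongr; linarith
      _ = Real.exp (f s) := by rw [← Real.exp_add]; congr 1; ring
  rw [← Finset.mul_expect, Finset.expect_add_distrib, Finset.expect_sub_distrib,
    Finset.expect_const univ_nonempty, Finset.expect_const univ_nonempty, ← hμ] at h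
  simpa using h

lemma two_mul_exp_le (a r : ℝ) : 2 * Real.exp a ≤ Real.exp (a + r) + Real.exp (a - r) := by
  have h1 := Real.add_one_le_exp r
  have h2 := Real.add_one_le_exp (-r)
  rw [sub_eq_add_neg, Real.exp_add, Real.exp_add]
  nlinarith [Real.exp_pos a]

/-- Symmetrization for a single random variable, at the level of exponential moments: the sign
is kept as an explicit average over `+` and `-`. -/
lemma symmetrize {T Ω : Type*} [Finite T] [Nonempty T] [Fintype Ω] [Nonempty Ω]
    (g : T → Ω → ℝ) (A : T → ℝ) :
    𝔼 x, maxExp (fun t => A t + (g t x - 𝔼 y, g t y)) ≤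
      𝔼 x, (maxExp (fun t => A t + 2 * g t x) + maxExp (fun t => A t - 2 * g t x)) / 2 := by
  have h1 : ∀ x, maxExp (fun t => A t + (g t x - 𝔼 y, g t y)) ≤
      𝔼 y, (maxExp (fun t => A t + 2 * g t x) + maxExp (fun t => A t - 2 * g t y)) / 2 := by
    intro x
    refine maxExp_le fun t => ?_
    have e : A t + (g t x - 𝔼 y, g t y) = 𝔼 y, (A t + (g t x - g t y)) := by
      rw [Finset.expect_add_distrib, Finset.expect_sub_distrib,
        Finset.expect_const univ_nonempty, Finset.expect_const univ_nonempty]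
    rw [e]
    refine (exp_expect_le _).trans (Finset.expect_le_expect fun y _ => ?_)
    have h2 := le_maxExp (fun t => A t + 2 * g t x) t
    have h3 := le_maxExp (fun t => A t - 2 * g t y) t
    have h4 := two_mul_exp_le (A t + (g t x - g t y)) (g t x + g t y)
    rw [show A t + (g t x - g t y) + (g t x + g t y) = A t + 2 * g t x by ring,
      show A t + (g t x - g t y) - (g t x + g t y) = A t - 2 * g t y by ring] at h4
    linarith
  refine (Finset.expect_le_expect fun x _ => h1 x).trans (le_of_eq ?_)
  simp only [add_div, Finset.expect_add_distrib, Finset.expect_const univ_nonempty]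

lemma expect_perm_average {S : Type*} [Fintype S] (e : Equiv.Perm S) (f : S → ℝ) :
    𝔼 s, f s = 𝔼 s, (f s + f (e s)) / 2 := by
  have h : 𝔼 s, f (e s) = 𝔼 s, f s := Fintype.expect_equiv e _ _ fun _ => rfl
  simp only [add_div, Finset.expect_add_distrib]
  rw [← Finset.expect_div, ← Finset.expect_div, h]
  ring

/-- The real number `±1` attached to a sign. -/
def sgn (u : ℤˣ) : ℝ := ((u : ℤ) : ℝ)

lemma sgn_neg (u : ℤˣ) : sgn (-u) = -sgn u := by simp [sgn]

/-- Negation of all signs except the one at `a`. -/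
def flipExcept {F : Type*} [DecidableEq F] (a : F) : Equiv.Perm (F → ℤˣ) :=
  Function.Involutive.toPerm (fun σ b => if b = a then σ b else -σ b) (by
    intro σ; ext b; by_cases h : b = a <;> simp [h])

lemma flipExcept_apply {F : Type*} [DecidableEq F] (a : F) (σ : F → ℤˣ) (b : F) :
    flipExcept a σ b = if b = a then σ b else -σ b := rfl

/-- Contraction: the maximum `M t` of the coordinates of the vector `N t`, multiplied by one
random sign, is dominated by the coordinates of `N t` multiplied by independent random signs. If
`t₁`, `t₂` are optimal for the signs `+`, `-` and `a` is the maximal coordinate of `N t₁`, then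
`M t₁ = N t₁ a` and `-M t₂ ≤ -N t₂ a`, so only the sign at `a` matters; the other signs are
removed by convexity. -/
lemma contraction {T F : Type*} [Finite T] [Nonempty T] [Fintype F] [DecidableEq F]
    (N : T → F → ℝ) (M : T → ℝ) (hM : ∀ t a, N t a ≤ M t) (hM' : ∀ t, ∃ a, M t = N t a)
    (A : T → ℝ) :
    (maxExp (fun t => A t + M t) + maxExp (fun t => A t - M t)) / 2 ≤
      𝔼 σ : F → ℤˣ, maxExp (fun t => A t + ∑ a, sgn (σ a) * N t a) := by
  obtain ⟨t₁, h₁⟩ := exists_maxExp_eq (fun t => A t + M t)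
  obtain ⟨t₂, h₂⟩ := exists_maxExp_eq (fun t => A t - M t)
  obtain ⟨a, ha⟩ := hM' t₁
  set E₁ := Real.exp (A t₁ + N t₁ a)
  set E₂ := Real.exp (A t₂ - N t₂ a)
  have hE₁ : maxExp (fun t => A t + M t) = E₁ := by rw [h₁]; simp only [ha, E₁]
  have hE₂ : maxExp (fun t => A t - M t) ≤ E₂ := by
    rw [h₂]; exact Real.exp_le_exp.2 (by have := hM t₂ a; linarith)
  set G : (F → ℤˣ) → ℝ := fun σ => maxExp (fun t => A t + ∑ b, sgn (σ b) * N t b) with hG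
  have key : ∀ σ : F → ℤˣ, (if σ a = 1 then E₁ else E₂) ≤ (G σ + G (flipExcept a σ)) / 2 := by
    intro σ
    have hsum : ∀ t, ∃ r, (∑ b, sgn (σ b) * N t b = sgn (σ a) * N t a + r) ∧
        (∑ b, sgn (flipExcept a σ b) * N t b = sgn (σ a) * N t a - r) := by
      intro t
      refine ⟨∑ b ∈ univ.erase a, sgn (σ b) * N t b, ?_, ?_⟩
      · exact (Finset.add_sum_erase _ (fun b => sgn (σ b) * N t b) (mem_univ a)).symm
      · rw [← Finset.add_sum_erase _ _ (mem_univ a), sub_eq_add_neg, ← Finset.sum_neg_distrib]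
        congr 1
        · simp [flipExcept_apply]
        · refine Finset.sum_congr rfl fun b hb => ?_
          have : b ≠ a := (Finset.mem_erase.1 hb).1
          simp [flipExcept_apply, this, sgn_neg]
    have hG2 : ∀ t, Real.exp (A t + sgn (σ a) * N t a) ≤ (G σ + G (flipExcept a σ)) / 2 := by
      intro t
      obtain ⟨r, hr1, hr2⟩ := hsum t
      have g1 := le_maxExp (fun t => A t + ∑ b, sgn (σ b) * N t b) t
      have g2 := le_maxExp (fun t => A t + ∑ b, sgn (flipExcept a σ b) * N t b) t
      have g3 := two_mul_exp_le (A t + sgn (σ a) * N t a) r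
      simp only [hr1] at g1
      simp only [hr2] at g2
      rw [← add_assoc] at g1
      rw [← add_sub_assoc] at g2
      simp only [hG]
      linarith
    rcases Int.units_eq_one_or (σ a) with h | h
    · have := hG2 t₁
      simpa [h, sgn, E₁] using this
    · have := hG2 t₂
      have hne : ¬ ((-1 : ℤˣ) = 1) := by decide
      simpa [h, hne, sgn, E₂, sub_eq_add_neg] using this
  have hneg : 𝔼 σ : F → ℤˣ, (if σ a = 1 then E₁ else E₂) = (E₁ + E₂) / 2 := by
    rw [expect_perm_average (Equiv.neg (F → ℤˣ))]
    rw [Finset.expect_congr rfl (g := fun _ => (E₁ + E₂) / 2),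
      Finset.expect_const univ_nonempty]
    intro σ _
    have hne : ¬ ((-1 : ℤˣ) = 1) := by decide
    rcases Int.units_eq_one_or (σ a) with h | h
    · simp [h, hne]
    · simp [h, hne, add_comm]
  calc _ ≤ (E₁ + E₂) / 2 := by linarith
    _ = 𝔼 σ : F → ℤˣ, (if σ a = 1 then E₁ else E₂) := hneg.symm
    _ ≤ 𝔼 σ, (G σ + G (flipExcept a σ)) / 2 := Finset.expect_le_expect fun σ _ => key σ
    _ = 𝔼 σ, G σ := (expect_perm_average _ _).symm

lemma expect_pi_succ {n : ℕ} {Ω : Type*} [Fintype Ω] (f : (Fin (n + 1) → Ω) → ℝ) :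
    𝔼 x, f x = 𝔼 y : Fin n → Ω, 𝔼 a, f (Fin.cons a y) := by
  rw [← Fintype.expect_equiv (Fin.consEquiv fun _ : Fin (n + 1) => Ω)
    (fun p => f (Fin.cons p.1 p.2)) f (fun p => rfl)]
  rw [← Finset.univ_product_univ, Finset.expect_product, Finset.expect_comm]

/-- A comparison of exponential moments that holds for one random variable with an arbitrary
shift `A` tensorizes to sums of `n` independent copies. -/
lemma tensorize {T Ω S : Type*} [Fintype Ω] [Fintype S] (g : T → Ω → ℝ) (h : T → S → ℝ)
    (step : ∀ A : T → ℝ, 𝔼 x, maxExp (fun t => A t + g t x) ≤ 𝔼 s, maxExp (fun t => A t + h t s))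
    (n : ℕ) (A : T → ℝ) :
    𝔼 x : Fin n → Ω, maxExp (fun t => A t + ∑ j, g t (x j)) ≤
      𝔼 s : Fin n → S, maxExp (fun t => A t + ∑ j, h t (s j)) := by
  induction n generalizing A with
  | zero => simp
  | succ n ih =>
    rw [expect_pi_succ, expect_pi_succ]
    simp only [Fin.sum_univ_succ, Fin.cons_zero, Fin.cons_succ]
    calc _ ≤ 𝔼 y : Fin n → Ω, 𝔼 s, maxExp (fun t => A t + (h t s + ∑ j, g t (y j))) := by
          refine Finset.expect_le_expect fun y _ => ?_
          have := step (fun t => A t + ∑ j, g t (y j))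
          simpa only [add_assoc, add_comm (∑ j, g _ (y j))] using this
      _ = 𝔼 s, 𝔼 y : Fin n → Ω, maxExp (fun t => (A t + h t s) + ∑ j, g t (y j)) := by
          rw [Finset.expect_comm]; simp only [add_assoc]
      _ ≤ 𝔼 s, 𝔼 y : Fin n → S, maxExp (fun t => (A t + h t s) + ∑ j, h t (y j)) :=
          Finset.expect_le_expect fun s _ => ih _
      _ = _ := by
          rw [Finset.expect_comm]; simp only [add_assoc]

/-! ### Pluralities in a list of messages -/

/-- The number of messages `m` in the list `t` whose encoding takes the value `a` at a coordinate
with generator row `x`. -/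
def symbolCount {k : ℕ} {F : Type*} [Field F] [DecidableEq F]
    (t : Finset (Fin k → F)) (x : Fin k → F) (a : F) : ℝ :=
  ((t.filter fun m => x ⬝ᵥ m = a).card : ℝ)

/-- The largest number of messages of `t` that agree at a coordinate with generator row `x`. -/
def plurality {k : ℕ} {F : Type*} [Field F] [DecidableEq F]
    (t : Finset (Fin k → F)) (x : Fin k → F) : ℝ :=
  ⨆ a, symbolCount t x a

lemma symbolCount_eq_sum {k : ℕ} {F : Type*} [Field F] [DecidableEq F]
    (t : Finset (Fin k → F)) (x : Fin k → F) (a : F) :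
    symbolCount t x a = ∑ m ∈ t, if x ⬝ᵥ m = a then (1 : ℝ) else 0 := by
  simp [symbolCount]

section Plurality

variable {k : ℕ} {F : Type*} [Field F] [Fintype F] [DecidableEq F]

lemma symbolCount_le_plurality (t : Finset (Fin k → F)) (x : Fin k → F) (a : F) :
    symbolCount t x a ≤ plurality t x :=
  le_ciSup (f := fun a => symbolCount t x a) (Set.finite_range _).bddAbove a

lemma exists_plurality_eq (t : Finset (Fin k → F)) (x : Fin k → F) :
    ∃ a, plurality t x = symbolCount t x a := by
  obtain ⟨a, ha⟩ := exists_eq_ciSup_of_finite (f := fun a => symbolCount t x a)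
  exact ⟨a, ha.symm⟩

lemma sum_mul_symbolCount (c : F → ℝ) (t : Finset (Fin k → F)) (x : Fin k → F) :
    ∑ a, c a * symbolCount t x a = ∑ m ∈ t, c (x ⬝ᵥ m) := by
  simp only [symbolCount_eq_sum, Finset.mul_sum]
  rw [Finset.sum_comm]
  simp

lemma sum_symbolCount (t : Finset (Fin k → F)) (x : Fin k → F) :
    ∑ a, symbolCount t x a = t.card := by
  simpa using sum_mul_symbolCount (fun _ => 1) t x

lemma sum_symbolCount_sq (t : Finset (Fin k → F)) (x : Fin k → F) :
    ∑ a, symbolCount t x a ^ 2 =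
      ∑ m ∈ t, ∑ m' ∈ t, if x ⬝ᵥ (m' - m) = 0 then (1 : ℝ) else 0 := by
  simp only [sq]
  rw [sum_mul_symbolCount (fun a => symbolCount t x a)]
  simp only [symbolCount_eq_sum, dotProduct_sub, sub_eq_zero]

/-- A nonzero linear form on `F^k` vanishes with probability `1 / q`. -/
lemma expect_dot_eq_zero (d : Fin k → F) (hd : d ≠ 0) :
    𝔼 x : Fin k → F, (if x ⬝ᵥ d = 0 then (1 : ℝ) else 0) = 1 / (Fintype.card F : ℝ) := by
  obtain ⟨i, hi⟩ := Function.ne_iff.1 hd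
  have hi : d i ≠ 0 := hi
  -- averaging over translations by the multiples of a vector `v` with `v ⬝ᵥ d = 1`
  set v : Fin k → F := Pi.single i (d i)⁻¹ with hv
  have hvd : v ⬝ᵥ d = 1 := by simp [hv, hi]
  have h1 : ∀ a : F, 𝔼 x : Fin k → F, (if x ⬝ᵥ d = 0 then (1 : ℝ) else 0) =
      𝔼 x : Fin k → F, (if x ⬝ᵥ d + a = 0 then (1 : ℝ) else 0) := by
    intro a
    refine (Fintype.expect_equiv (Equiv.addRight (a • v)) _ _ fun x => ?_).symm
    simp [add_dotProduct, smul_dotProduct, hvd]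
  have h2 : 𝔼 x : Fin k → F, (if x ⬝ᵥ d = 0 then (1 : ℝ) else 0) =
      𝔼 a : F, 𝔼 x : Fin k → F, (if x ⬝ᵥ d + a = 0 then (1 : ℝ) else 0) := by
    rw [← Finset.expect_congr rfl (fun a _ => h1 a), Finset.expect_const univ_nonempty]
  rw [h2, Finset.expect_comm]
  have h3 : ∀ x : Fin k → F, 𝔼 a : F, (if x ⬝ᵥ d + a = 0 then (1 : ℝ) else 0) =
      1 / (Fintype.card F : ℝ) := by
    intro x
    rw [Fintype.expect_eq_sum_div_card]
    simp [add_eq_zero_iff_neg_eq]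
  rw [Finset.expect_congr rfl (fun x _ => h3 x), Finset.expect_const univ_nonempty]

/-- Distinct messages collide pairwise with probability `1 / q`. -/
lemma expect_sum_symbolCount_sq (t : Finset (Fin k → F)) :
    𝔼 x : Fin k → F, ∑ a, symbolCount t x a ^ 2 =
      t.card + t.card * (t.card - 1) / (Fintype.card F : ℝ) := by
  simp only [sum_symbolCount_sq, Finset.expect_sum_comm]
  have h : ∀ m ∈ t, ∑ m' ∈ t, 𝔼 x : Fin k → F,
      (if x ⬝ᵥ (m' - m) = 0 then (1 : ℝ) else 0) = 1 + (t.card - 1) / (Fintype.card F : ℝ) := by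
    intro m hm
    rw [← Finset.add_sum_erase _ _ hm]
    have h1 : ∀ m' ∈ t.erase m, 𝔼 x : Fin k → F,
        (if x ⬝ᵥ (m' - m) = 0 then (1 : ℝ) else 0) = 1 / (Fintype.card F : ℝ) := fun m' hm' =>
      expect_dot_eq_zero _ (sub_ne_zero.2 (Finset.mem_erase.1 hm').1)
    rw [Finset.sum_congr rfl h1, Finset.sum_const, Finset.card_erase_of_mem hm]
    have : 1 ≤ t.card := Finset.card_pos.2 ⟨m, hm⟩
    simp [Nat.cast_sub this, Finset.expect_const univ_nonempty]
    ring
  rw [Finset.sum_congr rfl h, Finset.sum_const]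
  simp
  ring

/-- The excess of the plurality over the mean symbol count is controlled by the collision count:
the other symbols share a deficit of the same size. -/
lemma plurality_sub_sq_le (t : Finset (Fin k → F)) (x : Fin k → F) :
    (plurality t x - t.card / (Fintype.card F : ℝ)) ^ 2 ≤ (1 - 1 / (Fintype.card F : ℝ)) *
      (∑ a, symbolCount t x a ^ 2 - (t.card : ℝ) ^ 2 / (Fintype.card F : ℝ)) := by
  obtain ⟨a, ha⟩ := exists_plurality_eq t x
  set q : ℝ := (Fintype.card F : ℝ) with hq
  have hq1 : (1 : ℝ) < q := by
    rw [hq]; exact_mod_cast Fintype.one_lt_card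
  set L : ℝ := (t.card : ℝ)
  set u : F → ℝ := fun b => symbolCount t x b - L / q with hu
  have hsum : ∑ b, u b = 0 := by
    simp only [hu, Finset.sum_sub_distrib, sum_symbolCount, Finset.sum_const, Finset.card_univ,
      nsmul_eq_mul, ← hq]
    field_simp
    simp [L]
  have hsq : ∑ b, u b ^ 2 = ∑ b, symbolCount t x b ^ 2 - L ^ 2 / q := by
    have : ∀ b, u b ^ 2 = symbolCount t x b ^ 2 - 2 * (L / q) * symbolCount t x b
        + (L / q) ^ 2 := fun b => by simp only [hu]; ring
    simp only [this, Finset.sum_add_distrib, Finset.sum_sub_distrib, ← Finset.mul_sum,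
      sum_symbolCount, Finset.sum_const, Finset.card_univ, nsmul_eq_mul, ← hq]
    simp only [L]
    field_simp
    ring
  have hcs := sq_sum_le_card_mul_sum_sq (s := univ.erase a) (f := u)
  rw [Finset.card_erase_of_mem (mem_univ a), Finset.card_univ,
    Nat.cast_sub Fintype.card_pos, ← hq] at hcs
  have e1 := Finset.add_sum_erase univ u (mem_univ a)
  have e2 := Finset.add_sum_erase univ (fun b => u b ^ 2) (mem_univ a)
  rw [hsum] at e1
  rw [hsq] at e2
  have e3 : ∑ b ∈ univ.erase a, u b = -u a := by linarith
  rw [e3] at hcs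
  rw [ha, ← e2]
  change u a ^ 2 ≤ _
  set W := ∑ b ∈ univ.erase a, u b ^ 2
  have : (1 - 1 / q) * (u a ^ 2 + W) = ((q - 1) * (u a ^ 2 + W)) / q := by field_simp
  rw [this, le_div_iff₀ (by linarith)]
  push_cast at hcs
  nlinarith

/-- For a list of at least `4 / ε²` messages, the expected plurality exceeds the mean symbol count
by at most half of the excess that list decodability at radius `(1 - 1/q)(1 - ε)` tolerates. -/
lemma expect_plurality_le (t : Finset (Fin k → F)) (ε : ℝ) (hε : 0 < ε)
    (ht : 4 / ε ^ 2 ≤ t.card) :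
    𝔼 x : Fin k → F, plurality t x ≤ t.card / (Fintype.card F : ℝ) +
      (1 - 1 / (Fintype.card F : ℝ)) * (ε * t.card / 2) := by
  have hsq := expect_sum_symbolCount_sq t
  set q : ℝ := (Fintype.card F : ℝ) with hq
  have hq1 : (1 : ℝ) < q := by
    rw [hq]; exact_mod_cast Fintype.one_lt_card
  set L : ℝ := (t.card : ℝ) with hL
  have hLpos : 0 < L := lt_of_lt_of_le (by positivity) ht
  set p : ℝ := 1 - 1 / q with hp
  have hp0 : 0 < p := by
    rw [hp, sub_pos, div_lt_one (by linarith)]; exact hq1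
  set c : ℝ := p * (ε * L / 2) with hc
  have hc0 : 0 < c := by positivity
  -- `D ≤ (D² + c²) / (2c)` linearizes the passage from second to first moment
  have hpt : ∀ x : Fin k → F, plurality t x ≤
      L / q + c / 2 + p / (2 * c) * (∑ a, symbolCount t x a ^ 2 - L ^ 2 / q) := by
    intro x
    have h1 := plurality_sub_sq_le t x
    rw [← hq, ← hL, ← hp] at h1
    set D := plurality t x - L / q with hD
    have h2 : D ≤ c / 2 + D ^ 2 / (2 * c) := by
      have : c / 2 + D ^ 2 / (2 * c) - D = (D - c) ^ 2 / (2 * c) := by field_simp; ring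
      have : 0 ≤ (D - c) ^ 2 / (2 * c) := by positivity
      linarith
    have h3 : D ^ 2 / (2 * c) ≤ p / (2 * c) * (∑ a, symbolCount t x a ^ 2 - L ^ 2 / q) := by
      rw [div_mul_eq_mul_div]; gcongr
    linarith
  have h4 : 𝔼 x : Fin k → F, plurality t x ≤ 𝔼 x : Fin k → F,
      (L / q + c / 2 + p / (2 * c) * (∑ a, symbolCount t x a ^ 2 - L ^ 2 / q)) :=
    Finset.expect_le_expect fun x _ => hpt x
  rw [Finset.expect_add_distrib, Finset.expect_const univ_nonempty, ← Finset.mul_expect,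
    Finset.expect_sub_distrib, hsq, Finset.expect_const univ_nonempty] at h4
  have h5 : L + L * (L - 1) / q - L ^ 2 / q = L * p := by rw [hp]; field_simp; ring
  rw [h5] at h4
  have h6 : p / (2 * c) * (L * p) = p / ε := by rw [hc]; field_simp
  have h7 : p / ε ≤ c / 2 := by
    rw [hc, div_le_iff₀ hε]
    rw [div_le_iff₀ (by positivity)] at ht
    nlinarith
  linarith

end Plurality

/-! ### The probability that some list has large total plurality -/

section Moment

variable {k : ℕ} {F : Type*} [Field F] [Fintype F] [DecidableEq F]

/-- One coordinate of the code: centred pluralities are dominated by signed sums over the list. -/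
lemma plurality_step {T : Type*} [Finite T] [Nonempty T] (τ : T → Finset (Fin k → F))
    (b l : ℝ) (hl : 0 ≤ l) (hb : ∀ t, 𝔼 x : Fin k → F, plurality (τ t) x ≤ b) (A : T → ℝ) :
    𝔼 x : Fin k → F, maxExp (fun t => A t + l * (plurality (τ t) x - b)) ≤
      𝔼 s : (Fin k → F) × (F → ℤˣ),
        maxExp (fun t => A t + ∑ m ∈ τ t, 2 * l * sgn (s.2 (s.1 ⬝ᵥ m))) := by
  calc _ ≤ 𝔼 x : Fin k → F, maxExp (fun t => A t +
        (l * plurality (τ t) x - 𝔼 y : Fin k → F, l * plurality (τ t) y)) := by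
        refine Finset.expect_le_expect fun x _ => maxExp_mono fun t => ?_
        rw [← Finset.mul_expect]
        have := mul_le_mul_of_nonneg_left (hb t) hl
        linarith
    _ ≤ _ := symmetrize (fun t x => l * plurality (τ t) x) A
    _ ≤ 𝔼 x : Fin k → F, 𝔼 σ : F → ℤˣ,
        maxExp (fun t => A t + ∑ a, sgn (σ a) * (2 * (l * symbolCount (τ t) x a))) := by
        refine Finset.expect_le_expect fun x _ => ?_
        refine contraction (fun t a => 2 * (l * symbolCount (τ t) x a))
          (fun t => 2 * (l * plurality (τ t) x)) (fun t a => ?_) (fun t => ?_) A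
        · have := symbolCount_le_plurality (τ t) x a
          gcongr
        · obtain ⟨a, ha⟩ := exists_plurality_eq (τ t) x
          exact ⟨a, by rw [ha]⟩
    _ = _ := by
        rw [← Finset.univ_product_univ, Finset.expect_product]
        refine Finset.expect_congr rfl fun x _ => Finset.expect_congr rfl fun σ _ => ?_
        congr 1
        ext t
        have := sum_mul_symbolCount (fun a => 2 * l * sgn (σ a)) (τ t) x
        rw [← this]
        congr 1
        exact Finset.sum_congr rfl fun a _ => by ring

lemma maxExp_unit (A : Unit → ℝ) : maxExp A = Real.exp (A ()) := by
  simp [maxExp]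

/-- A single codeword contributes a sum of `n` independent signs, scaled by `c`. -/
lemma expect_exp_sign_sum_le (m : Fin k → F) (c : ℝ) (n : ℕ) :
    𝔼 s : Fin n → (Fin k → F) × (F → ℤˣ),
      Real.exp (∑ j, c * sgn ((s j).2 ((s j).1 ⬝ᵥ m))) ≤ Real.exp (n * (c ^ 2 / 2)) := by
  have step : ∀ A : Unit → ℝ, 𝔼 s : (Fin k → F) × (F → ℤˣ),
      maxExp (fun t : Unit => A t + c * sgn (s.2 (s.1 ⬝ᵥ m))) ≤
      𝔼 _s : Unit, maxExp (fun t : Unit => A t + c ^ 2 / 2) := by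
    intro A
    simp only [maxExp_unit, Finset.expect_const univ_nonempty]
    rw [← Finset.univ_product_univ, Finset.expect_product]
    refine Finset.expect_le univ_nonempty fun x _ => ?_
    rw [expect_perm_average (Equiv.neg (F → ℤˣ))]
    refine Finset.expect_le univ_nonempty fun σ _ => ?_
    have h : Real.exp (A ()) * Real.cosh c ≤ Real.exp (A () + c ^ 2 / 2) := by
      rw [Real.exp_add]
      exact mul_le_mul_of_nonneg_left (Real.cosh_le_exp_half_sq c) (Real.exp_pos _).le
    rw [Real.cosh_eq, mul_div_assoc', mul_add, ← Real.exp_add, ← Real.exp_add] at h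
    rcases Int.units_eq_one_or (σ (x ⬝ᵥ m)) with h' | h'
    · simpa [h', sgn] using h
    · simpa [h', sgn, add_comm] using h
  have := tensorize _ _ step n (fun _ => 0)
  simpa [maxExp_unit, Finset.expect_const univ_nonempty] using this

/-- After symmetrization and contraction the process is linear in the list, so its supremum over lists
of size `L` is at most `L` times the maximum over the `q^k` messages. -/
lemma moment_bound {T : Type*} [Finite T] [Nonempty T] (τ : T → Finset (Fin k → F))
    (L : ℕ) (hL : 0 < L) (hτ : ∀ t, (τ t).card = L)
    (b l : ℝ) (hl : 0 ≤ l) (hb : ∀ t, 𝔼 x : Fin k → F, plurality (τ t) x ≤ b) (n : ℕ) :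
    𝔼 x : Fin n → Fin k → F, maxExp (fun t => ∑ j, l * (plurality (τ t) (x j) - b)) ≤
      (Fintype.card F : ℝ) ^ k * Real.exp (n * ((2 * l * L) ^ 2 / 2)) := by
  have h1 := tensorize _ _ (plurality_step τ b l hl hb) n (fun _ => 0)
  simp only [zero_add] at h1
  refine h1.trans ?_
  have h2 : ∀ s : Fin n → (Fin k → F) × (F → ℤˣ),
      maxExp (fun t => ∑ j, ∑ m ∈ τ t, 2 * l * sgn ((s j).2 ((s j).1 ⬝ᵥ m))) ≤
      ∑ m : Fin k → F, Real.exp (∑ j, 2 * l * L * sgn ((s j).2 ((s j).1 ⬝ᵥ m))) := by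
    intro s
    refine maxExp_le fun t => ?_
    rw [Finset.sum_comm]
    set B : (Fin k → F) → ℝ := fun m => ∑ j, 2 * l * sgn ((s j).2 ((s j).1 ⬝ᵥ m)) with hB
    -- some message of the list carries at least the average
    have hne : (τ t).Nonempty := by rw [← Finset.card_pos, hτ]; exact hL
    obtain ⟨m, hm, hmB⟩ := Finset.exists_le_of_sum_le (s := τ t) (f := fun _ =>
      (∑ m ∈ τ t, B m) / L) (g := B) hne (by
        rw [Finset.sum_const, hτ, nsmul_eq_mul]
        have : (L : ℝ) ≠ 0 := by positivity
        field_simp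
        exact le_rfl)
    have hL' : (0 : ℝ) < L := by exact_mod_cast hL
    rw [div_le_iff₀ hL'] at hmB
    calc Real.exp (∑ m ∈ τ t, B m) ≤
        Real.exp (∑ j, 2 * l * L * sgn ((s j).2 ((s j).1 ⬝ᵥ m))) := by
          refine Real.exp_le_exp.2 (hmB.trans (le_of_eq ?_))
          simp only [hB, Finset.sum_mul]
          exact Finset.sum_congr rfl fun j _ => by ring
      _ ≤ _ := Finset.single_le_sum (f := fun m : Fin k → F =>
          Real.exp (∑ j, 2 * l * L * sgn ((s j).2 ((s j).1 ⬝ᵥ m))))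
          (fun _ _ => (Real.exp_pos _).le) (mem_univ m)
  calc _ ≤ _ := Finset.expect_le_expect fun s _ => h2 s
    _ = ∑ m : Fin k → F, 𝔼 s : Fin n → (Fin k → F) × (F → ℤˣ),
        Real.exp (∑ j, 2 * l * L * sgn ((s j).2 ((s j).1 ⬝ᵥ m))) := Finset.expect_sum_comm _ _ _
    _ ≤ ∑ m : Fin k → F, Real.exp (n * ((2 * l * L) ^ 2 / 2)) :=
        Finset.sum_le_sum fun m _ => expect_exp_sign_sum_le m _ n
    _ = _ := by simp

/-- A generator matrix (given by its rows) is bad if some list of `L` messages has total plurality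
as large as it must be when all its codewords lie within relative distance
`(1 - 1/q)(1 - ε)` of a common word. -/
def BadRows {n : ℕ} (L : ℕ) (ε : ℝ) (x : Fin n → Fin k → F) : Prop :=
  ∃ t : Finset (Fin k → F), t.card = L ∧
    n * (L / (Fintype.card F : ℝ) + (1 - 1 / (Fintype.card F : ℝ)) * (ε * L)) ≤
      ∑ j, plurality t (x j)

/-- Markov's inequality applied to `moment_bound`. -/
lemma card_badRows_le (n L : ℕ) (ε : ℝ) (hε : 0 < ε) (hL : 4 / ε ^ 2 ≤ L) :
    ((univ.filter fun x : Fin n → Fin k → F => BadRows L ε x).card : ℝ) ≤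
      (Fintype.card (Fin n → Fin k → F) : ℝ) *
        ((Fintype.card F : ℝ) ^ k * Real.exp (-(ε ^ 2 * n / 128))) := by
  by_cases hT : Nonempty {t : Finset (Fin k → F) // t.card = L}
  swap
  · rw [Finset.filter_false_of_mem]
    · simp only [Finset.card_empty, Nat.cast_zero]
      positivity
    · rintro x - ⟨t, ht, -⟩
      exact hT ⟨t, ht⟩
  have hLpos : (0 : ℝ) < L := lt_of_lt_of_le (by positivity) hL
  have hb : ∀ t : {t : Finset (Fin k → F) // t.card = L},
      𝔼 x : Fin k → F, plurality t.1 x ≤ L / (Fintype.card F : ℝ) +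
        (1 - 1 / (Fintype.card F : ℝ)) * (ε * L / 2) := by
    rintro ⟨t, rfl⟩
    exact expect_plurality_le t ε hε hL
  set q : ℝ := (Fintype.card F : ℝ) with hq
  have hq2 : (2 : ℝ) ≤ q := by
    rw [hq]; exact_mod_cast Fintype.one_lt_card
  have hp : (1 : ℝ) / 2 ≤ 1 - 1 / q := by
    have : 1 / q ≤ 1 / 2 := one_div_le_one_div_of_le (by norm_num) hq2
    linarith
  set b := L / q + (1 - 1 / q) * (ε * L / 2) with hbdef
  -- `l` minimizes `2 l² L² n - l (ε L / 4) n`, the exponent in Markov's inequality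
  set l : ℝ := ε / (16 * L) with hl
  have hl0 : 0 < l := by positivity
  have hmom := moment_bound (fun t : {t : Finset (Fin k → F) // t.card = L} => t.1) L
    (by exact_mod_cast hLpos) (fun t => t.2) b l hl0.le hb n
  have hind : ∀ x : Fin n → Fin k → F,
      (if BadRows L ε x then Real.exp (ε ^ 2 * n / 64) else 0) ≤
      maxExp (fun t : {t : Finset (Fin k → F) // t.card = L} =>
        ∑ j, l * (plurality t.1 (x j) - b)) := by
    intro x
    split_ifs with hx
    · obtain ⟨t, ht, hx⟩ := hx
      refine le_trans (Real.exp_le_exp.2 ?_)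
        (le_maxExp (fun t : {t : Finset (Fin k → F) // t.card = L} =>
          ∑ j, l * (plurality t.1 (x j) - b)) ⟨t, ht⟩)
      simp only
      rw [← Finset.mul_sum, Finset.sum_sub_distrib, Finset.sum_const, Finset.card_univ,
        Fintype.card_fin, nsmul_eq_mul]
      have h1 : n * ((1 - 1 / q) * (ε * L / 2)) ≤ ∑ j, plurality t (x j) - n * b := by
        rw [hbdef]; rw [← hq] at hx; linarith
      have h2 : n * (1 / 2 * (ε * L / 2)) ≤ (n : ℝ) * ((1 - 1 / q) * (ε * L / 2)) := by
        gcongr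
      calc ε ^ 2 * n / 64 = l * (n * (1 / 2 * (ε * L / 2))) := by
            rw [hl]; field_simp; ring
        _ ≤ _ := by gcongr; linarith
    · obtain ⟨t⟩ := hT
      exact (Real.exp_pos _).le.trans (le_maxExp _ t)
  have h3 := (Finset.expect_le_expect (s := univ) fun x _ => hind x).trans hmom
  rw [Fintype.expect_eq_sum_div_card, ← Finset.sum_filter, Finset.sum_const, nsmul_eq_mul,
    div_le_iff₀ (by positivity)] at h3
  have h4 : Real.exp (n * ((2 * l * L) ^ 2 / 2)) = Real.exp (ε ^ 2 * n / 128) := by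
    congr 1; rw [hl]; field_simp; ring
  have h5 : Real.exp (ε ^ 2 * n / 64) =
      Real.exp (ε ^ 2 * n / 128) * Real.exp (ε ^ 2 * n / 128) := by
    rw [← Real.exp_add]; congr 1; ring
  rw [h4, h5, ← mul_assoc] at h3
  have hE := Real.exp_pos (ε ^ 2 * n / 128)
  rw [Real.exp_neg]
  set E := Real.exp (ε ^ 2 * n / 128)
  have h6 : ((univ.filter fun x : Fin n → Fin k → F => BadRows L ε x).card : ℝ) * E ≤
      q ^ k * (Fintype.card (Fin n → Fin k → F) : ℝ) := by
    refine le_of_mul_le_mul_right (h3.trans (le_of_eq ?_)) hE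
    ring
  rw [← le_div_iff₀ hE] at h6
  refine h6.trans (le_of_eq ?_)
  rw [div_eq_mul_inv]; ring

end Moment

/-! ### From generator matrices to subspaces -/

section Subspaces

variable {k n : ℕ} {F : Type} [Field F]

/-- The encoding map `F^k → F^n` whose `j`-th coordinate is `m ↦ x j ⬝ᵥ m`. -/
def encode (x : Fin n → Fin k → F) : (Fin k → F) →ₗ[F] (Fin n → F) :=
  Matrix.toLin' (Matrix.of x)

lemma encode_apply (x : Fin n → Fin k → F) (m : Fin k → F) (j : Fin n) :
    encode x m j = x j ⬝ᵥ m := by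
  simp [encode, Matrix.mulVec]

/-- Every `k`-dimensional subspace is the image of the same number of injective encodings. -/
lemma card_injective_encode (B : Submodule F (Fin n → F) → Prop) :
    Nat.card {x : Fin n → Fin k → F //
        Function.Injective (encode x) ∧ B (LinearMap.range (encode x))} =
      Nat.card {V : Submodule F (Fin n → F) // Module.finrank F V = k ∧ B V} *
        Nat.card ((Fin k → F) ≃ₗ[F] (Fin k → F)) := by
  have hc : ∀ V : {V : Submodule F (Fin n → F) // Module.finrank F V = k ∧ B V},
      Nonempty ((Fin k → F) ≃ₗ[F] V.1) := fun V =>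
    ⟨LinearEquiv.ofFinrankEq _ _ (by rw [V.2.1]; simp)⟩
  let c := fun V => (hc V).some
  let f : {V : Submodule F (Fin n → F) // Module.finrank F V = k ∧ B V} ×
      ((Fin k → F) ≃ₗ[F] (Fin k → F)) → ((Fin k → F) →ₗ[F] (Fin n → F)) :=
    fun p => p.1.1.subtype ∘ₗ (p.2.trans (c p.1)).toLinearMap
  have hf : ∀ p m, f p m = (c p.1 (p.2 m) : Fin n → F) := fun p m => rfl
  have hfinj : ∀ p, Function.Injective (f p) := fun p =>
    Subtype.val_injective.comp (p.2.trans (c p.1)).injective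
  have hfrange : ∀ p, LinearMap.range (f p) = p.1.1 := by
    intro p
    simp only [f]
    rw [LinearMap.range_comp, LinearEquiv.range, Submodule.map_subtype_top]
  have henc : ∀ g : (Fin k → F) →ₗ[F] (Fin n → F), encode (LinearMap.toMatrix' g) = g := by
    intro g
    exact Matrix.toLin'_toMatrix' g
  rw [← Nat.card_prod]
  symm
  refine Nat.card_eq_of_bijective (fun p => ⟨LinearMap.toMatrix' (f p), ?_⟩) ⟨?_, ?_⟩
  · rw [henc, hfrange]
    exact ⟨hfinj p, p.1.2.2⟩
  · rintro ⟨V, e⟩ ⟨V', e'⟩ h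
    have h' : f (V, e) = f (V', e') :=
      LinearMap.toMatrix'.injective (Subtype.ext_iff.1 h)
    have hV : V = V' := by
      apply Subtype.ext
      rw [← hfrange (V, e), ← hfrange (V', e'), h']
    subst hV
    have : e = e' := by
      ext1 m
      have := LinearMap.congr_fun h' m
      rw [hf, hf] at this
      exact (c V).injective (Subtype.ext this)
    rw [this]
  · rintro ⟨x, hx, hB⟩
    let V : {V : Submodule F (Fin n → F) // Module.finrank F V = k ∧ B V} :=
      ⟨LinearMap.range (encode x), by
        rw [LinearMap.finrank_range_of_inj hx]; simp, hB⟩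
    refine ⟨(V, (LinearEquiv.ofInjective (encode x) hx).trans (c V).symm), ?_⟩
    apply Subtype.ext
    simp only
    have : f (V, (LinearEquiv.ofInjective (encode x) hx).trans (c V).symm) = encode x := by
      apply LinearMap.ext
      intro m
      rw [hf]
      simp only [LinearEquiv.trans_apply, LinearEquiv.apply_symm_apply]
      rfl
    rw [this]
    exact LinearMap.toMatrix'_toLin' (Matrix.of x)

variable [Fintype F] [DecidableEq F]

/-- A union bound over the nonzero messages. -/
lemma card_not_injective_le :
    ((univ.filter fun x : Fin n → Fin k → F => ¬ Function.Injective (encode x)).card : ℝ) ≤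
      (Fintype.card (Fin n → Fin k → F) : ℝ) *
        ((Fintype.card F : ℝ) ^ k / (Fintype.card F : ℝ) ^ n) := by
  set q : ℝ := (Fintype.card F : ℝ) with hq
  let Z : (Fin k → F) → Finset (Fin k → F) := fun m => univ.filter fun y => y ⬝ᵥ m = 0
  have hZ : ∀ m : Fin k → F, m ≠ 0 → ((Z m).card : ℝ) = q ^ k / q := by
    intro m hm
    have h := expect_dot_eq_zero m hm
    rw [Fintype.expect_eq_sum_div_card, Finset.sum_boole, div_eq_iff (by positivity)] at h
    rw [h]
    simp [hq]
    ring
  have hsub : (univ.filter fun x : Fin n → Fin k → F => ¬ Function.Injective (encode x)) ⊆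
      (univ.filter fun m : Fin k → F => m ≠ 0).biUnion
        fun m => Fintype.piFinset fun _ : Fin n => Z m := by
    intro x hx
    rw [Finset.mem_filter, injective_iff_map_eq_zero] at hx
    push Not at hx
    obtain ⟨-, m, hm, hm0⟩ := hx
    refine Finset.mem_biUnion.2 ⟨m, by simpa using hm0, ?_⟩
    rw [Fintype.mem_piFinset]
    intro j
    have := congrFun hm j
    rw [encode_apply] at this
    simpa [Z] using this
  calc _ ≤ ((((univ.filter fun m : Fin k → F => m ≠ 0).biUnion
        fun m => Fintype.piFinset fun _ : Fin n => Z m).card : ℕ) : ℝ) := by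
        exact_mod_cast Finset.card_le_card hsub
    _ ≤ ((∑ m ∈ univ.filter fun m : Fin k → F => m ≠ 0,
        (Fintype.piFinset fun _ : Fin n => Z m).card : ℕ) : ℝ) := by
        exact_mod_cast Finset.card_biUnion_le
    _ = ∑ m ∈ univ.filter fun m : Fin k → F => m ≠ 0, (q ^ k / q) ^ n := by
        push_cast
        refine Finset.sum_congr rfl fun m hm => ?_
        rw [Fintype.card_piFinset]
        simp [hZ m (by simpa using hm)]
    _ ≤ ∑ m : Fin k → F, (q ^ k / q) ^ n :=
        Finset.sum_le_sum_of_subset_of_nonneg (Finset.filter_subset _ _)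
          fun _ _ _ => by positivity
    _ = _ := by
        simp [hq, div_pow]
        ring

/-- A close list of codewords forces a list of messages with large total plurality. -/
lemma badRows_of_not_listDecodable (hn : 0 < n) (x : Fin n → Fin k → F)
    (ε : ℝ) (L : ℕ)
    (h : ¬ listDecodableSet (LinearMap.range (encode x) : Set (Fin n → F))
      ((1 - 1 / (Fintype.card F : ℝ)) * (1 - ε)) L) :
    BadRows (L + 1) ε x := by
  simp only [listDecodableSet, not_forall, not_le] at h
  obtain ⟨w, hw⟩ := h
  set q : ℝ := (Fintype.card F : ℝ) with hq
  set ρ := (1 - 1 / q) * (1 - ε) with hρ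
  set t₀ : Finset (Fin k → F) := univ.filter fun m => relDist (encode x m) w ≤ ρ with ht₀
  have hcard : L + 1 ≤ t₀.card := by
    have : Nat.card {c : Fin n → F //
        c ∈ (LinearMap.range (encode x) : Set (Fin n → F)) ∧ relDist c w ≤ ρ} ≤ t₀.card := by
      rw [← Fintype.card_coe t₀, ← Nat.card_eq_fintype_card]
      refine Nat.card_le_card_of_surjective
        (fun m : t₀ => ⟨encode x m.1, ⟨m.1, rfl⟩, ?_⟩) ?_
      · have := m.2
        simpa only [ht₀, Finset.mem_filter, Finset.mem_univ, true_and] using this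
      · rintro ⟨_, ⟨m, rfl⟩, hm⟩
        exact ⟨⟨m, by simpa [ht₀] using hm⟩, rfl⟩
    omega
  obtain ⟨t, htt, htc⟩ := Finset.exists_subset_card_eq hcard
  refine ⟨t, htc, ?_⟩
  have hnR : (0 : ℝ) < n := by exact_mod_cast hn
  have hagree : ∀ m ∈ t, n * (1 / q + (1 - 1 / q) * ε) ≤
      ∑ j, if x j ⬝ᵥ m = w j then (1 : ℝ) else 0 := by
    intro m hm
    have hd : relDist (encode x m) w ≤ ρ := by
      have := htt hm
      simpa [ht₀] using this
    rw [relDist, div_le_iff₀ hnR] at hd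
    have h1 : (∑ j, if x j ⬝ᵥ m = w j then (1 : ℝ) else 0) +
        (hammingDist (encode x m) w : ℝ) = n := by
      rw [hammingDist, Finset.sum_boole]
      simp only [encode_apply]
      have := Finset.card_filter_add_card_filter_not (s := (univ : Finset (Fin n)))
        (fun j => x j ⬝ᵥ m = w j)
      rw [Finset.card_univ, Fintype.card_fin] at this
      exact_mod_cast this
    rw [hρ] at hd
    nlinarith
  have hsum := Finset.sum_le_sum hagree
  rw [Finset.sum_const, htc, nsmul_eq_mul, Finset.sum_comm] at hsum
  calc _ = ((L + 1 : ℕ) : ℝ) * (n * (1 / q + (1 - 1 / q) * ε)) := by ring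
    _ ≤ _ := hsum
    _ ≤ _ := by
        refine Finset.sum_le_sum fun j _ => ?_
        rw [← symbolCount_eq_sum]
        exact symbolCount_le_plurality _ _ _

/-- If at least half of all matrices are injective, the fraction of bad subspaces is at most twice
the fraction of bad matrices. -/
lemma good_ratio (hn : 0 < n) (ε P : ℝ) (L : ℕ)
    (hinj : (Fintype.card F : ℝ) ^ k / (Fintype.card F : ℝ) ^ n ≤ 1 / 2)
    (hbad : ((univ.filter fun x : Fin n → Fin k → F => BadRows (L + 1) ε x).card : ℝ) ≤
      (Fintype.card (Fin n → Fin k → F) : ℝ) * P) :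
    1 - 2 * P ≤ (Nat.card {V : Submodule F (Fin n → F) // Module.finrank F V = k ∧
        listDecodableSet (V : Set (Fin n → F))
          ((1 - 1 / (Fintype.card F : ℝ)) * (1 - ε)) L} : ℝ) /
      (Nat.card {V : Submodule F (Fin n → F) // Module.finrank F V = k} : ℝ) := by
  set ρ := (1 - 1 / (Fintype.card F : ℝ)) * (1 - ε) with hρ
  have h1 := card_injective_encode (k := k) (n := n) (F := F) (fun _ => True)
  have h2 := card_injective_encode (k := k) (n := n) (F := F)
    (fun V => listDecodableSet (V : Set (Fin n → F)) ρ L)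
  simp only [and_true] at h1
  set total := Nat.card {V : Submodule F (Fin n → F) // Module.finrank F V = k}
  set good := Nat.card {V : Submodule F (Fin n → F) // Module.finrank F V = k ∧
        listDecodableSet (V : Set (Fin n → F)) ρ L}
  set N := Nat.card ((Fin k → F) ≃ₗ[F] (Fin k → F))
  rw [Nat.card_eq_fintype_card, Fintype.card_subtype] at h1 h2
  have hni := card_not_injective_le (k := k) (n := n) (F := F)
  set all : ℝ := (Fintype.card (Fin n → Fin k → F) : ℝ) with hall
  have hallpos : 0 < all := by rw [hall]; exact_mod_cast Fintype.card_pos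
  have hsplit : ((univ.filter fun x : Fin n → Fin k → F =>
      Function.Injective (encode x)).card : ℝ) + ((univ.filter fun x : Fin n → Fin k → F =>
      ¬ Function.Injective (encode x)).card : ℝ) = all := by
    rw [hall, ← Finset.card_univ]
    exact_mod_cast Finset.card_filter_add_card_filter_not _
  have hcover : ((univ.filter fun x : Fin n → Fin k → F =>
      Function.Injective (encode x)).card : ℝ) ≤
      ((univ.filter fun x : Fin n → Fin k → F => Function.Injective (encode x) ∧
        listDecodableSet (LinearMap.range (encode x) : Set (Fin n → F)) ρ L).card : ℝ) +
      ((univ.filter fun x : Fin n → Fin k → F => BadRows (L + 1) ε x).card : ℝ) := by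
    rw [← Nat.cast_add, Nat.cast_le]
    refine le_trans (Finset.card_le_card ?_) (Finset.card_union_le _ _)
    intro x hx
    have hx : Function.Injective (encode x) := (Finset.mem_filter.1 hx).2
    by_cases hl : listDecodableSet (LinearMap.range (encode x) : Set (Fin n → F)) ρ L
    · exact Finset.mem_union_left _ (Finset.mem_filter.2 ⟨mem_univ _, hx, hl⟩)
    · exact Finset.mem_union_right _ (Finset.mem_filter.2
        ⟨mem_univ _, badRows_of_not_listDecodable hn x ε L hl⟩)
  rw [h2] at hcover
  rw [h1] at hcover hsplit
  push_cast at hcover hsplit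
  have h3 : all * ((Fintype.card F : ℝ) ^ k / (Fintype.card F : ℝ) ^ n) ≤ all * (1 / 2) := by
    gcongr
  have h4 : all / 2 ≤ total * N := by linarith
  have hP : 0 ≤ P := by
    by_contra hneg
    have : all * P < 0 := mul_neg_of_pos_of_neg hallpos (not_le.1 hneg)
    have : (0 : ℝ) ≤ ((univ.filter fun x : Fin n → Fin k → F =>
      BadRows (L + 1) ε x).card : ℝ) := by positivity
    linarith
  have hTN : (0 : ℝ) < total * N := by linarith
  have hT : (0 : ℝ) < total := by
    rcases (Nat.cast_nonneg total : (0 : ℝ) ≤ total).eq_or_lt with h | h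
    · rw [← h] at hTN; simp at hTN
    · exact h
  have hN : (0 : ℝ) < N := (mul_pos_iff_of_pos_left hT).1 hTN
  rw [le_div_iff₀ hT]
  refine le_of_mul_le_mul_right ?_ hN
  nlinarith

end Subspaces

/-- Main theorem: there is an absolute constant `C > 0` such that for every
prime power `q` (realised as the cardinality of a finite field `F`) and every `ε ∈ (0,1)`:
for every `γ > 0` there exists `n₀` such that for all `n ≥ n₀`, with `k = ⌊ε²n/(C·log q)⌋`,
a uniformly random `k`-dimensional linear subspace of `F^n` is
`((1 − 1/q)(1 − ε), ⌈4/ε²⌉)`-list decodable with probability at least `1 − γ`.  The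
probability is expressed as the ratio of the number of `k`-dimensional subspaces that are
list decodable to the total number of `k`-dimensional subspaces. -/
theorem stmt0 :
    ∃ C : ℝ, 0 < C ∧
      ∀ (q : ℕ) (F : Type) [Field F] [Fintype F] [DecidableEq F],
        Fintype.card F = q →
        ∀ ε : ℝ, 0 < ε → ε < 1 →
        ∀ γ : ℝ, 0 < γ →
        ∃ n₀ : ℕ, ∀ n : ℕ, n₀ ≤ n →
          1 - γ ≤
            (Nat.card {V : Submodule F (Fin n → F) //
                Module.finrank F V = ⌊ε ^ 2 * n / (C * Real.log q)⌋₊ ∧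
                listDecodableSet (V : Set (Fin n → F))
                  ((1 - 1 / (q : ℝ)) * (1 - ε)) ⌈4 / ε ^ 2⌉₊} : ℝ) /
              (Nat.card {V : Submodule F (Fin n → F) //
                Module.finrank F V = ⌊ε ^ 2 * n / (C * Real.log q)⌋₊} : ℝ) := by
  refine ⟨256, by norm_num, ?_⟩
  rintro q F _ _ _ rfl ε hε hε1 γ hγ
  refine ⟨⌈512 / (γ * ε ^ 2)⌉₊ + 2, fun n hn => ?_⟩
  have hn2 : 2 ≤ n := by omega
  have hnR : 512 / (γ * ε ^ 2) ≤ n :=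
    (Nat.le_ceil _).trans (by exact_mod_cast (by omega : ⌈512 / (γ * ε ^ 2)⌉₊ ≤ n))
  set k := ⌊ε ^ 2 * n / (256 * Real.log (Fintype.card F : ℝ))⌋₊ with hk
  have hq2 : (2 : ℝ) ≤ (Fintype.card F : ℝ) := by exact_mod_cast Fintype.one_lt_card
  have hlog : (1 : ℝ) / 2 ≤ Real.log (Fintype.card F : ℝ) := by
    have := Real.log_le_log (by norm_num) hq2
    have := Real.log_two_gt_d9
    linarith
  have hkle : (k : ℝ) * Real.log (Fintype.card F : ℝ) ≤ ε ^ 2 * n / 256 := by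
    have h := Nat.floor_le (a := ε ^ 2 * n / (256 * Real.log (Fintype.card F : ℝ)))
      (by positivity)
    rw [← hk, le_div_iff₀ (by linarith)] at h
    linarith
  have hqk : (Fintype.card F : ℝ) ^ k ≤ Real.exp (ε ^ 2 * n / 256) := by
    rw [← Real.exp_log (show (0 : ℝ) < (Fintype.card F : ℝ) by linarith), ← Real.exp_nat_mul]
    exact Real.exp_le_exp.2 hkle
  have hkn : k + 1 ≤ n := by
    have h1 : ε ^ 2 * n ≤ 1 * n := by gcongr; nlinarith
    have h2 : (k : ℝ) * (1 / 2) ≤ k * Real.log (Fintype.card F : ℝ) := by gcongr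
    have h3 : (2 : ℝ) ≤ n := by exact_mod_cast hn2
    have h4 : (k : ℝ) + 1 ≤ n := by linarith
    exact_mod_cast h4
  have hinj : (Fintype.card F : ℝ) ^ k / (Fintype.card F : ℝ) ^ n ≤ 1 / 2 := by
    rw [div_le_div_iff₀ (by positivity) (by norm_num), one_mul]
    calc (Fintype.card F : ℝ) ^ k * 2 ≤ (Fintype.card F : ℝ) ^ k * (Fintype.card F : ℝ) := by
          gcongr
      _ = (Fintype.card F : ℝ) ^ (k + 1) := (pow_succ _ _).symm
      _ ≤ _ := pow_le_pow_right₀ (by linarith) hkn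
  have hbad := card_badRows_le (k := k) (F := F) n (⌈4 / ε ^ 2⌉₊ + 1) ε hε
    ((Nat.le_ceil _).trans (by push_cast; linarith))
  refine le_trans ?_ (good_ratio (k := k) (n := n) (F := F) (by omega) ε _ _ hinj hbad)
  set y := ε ^ 2 * n / 256 with hy
  have hy0 : 2 / γ ≤ y := by
    rw [div_le_iff₀ (by positivity)] at hnR
    rw [hy, div_le_iff₀ hγ]
    linarith
  have hP : (Fintype.card F : ℝ) ^ k * Real.exp (-(ε ^ 2 * n / 128)) ≤ Real.exp (-y) := by
    calc _ ≤ Real.exp y * Real.exp (-(ε ^ 2 * n / 128)) := by gcongr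
      _ = _ := by rw [← Real.exp_add]; congr 1; rw [hy]; ring
  have hE : Real.exp (-y) ≤ γ / 2 := by
    rw [Real.exp_neg]
    refine inv_le_of_inv_le₀ (by positivity) ?_
    rw [inv_div]
    have := Real.add_one_le_exp y
    linarith
  linarith
end
end

section
/- Let q be a prime power, k, n ≥ 1, and let G be a uniformly random matrix in F_q^{k×n}. For messages i, j ∈ F_q^k, let c_i = iG and c_j = jG be the corresponding codewords in F_q^n. Then the expected inner product E⟨φ(c_i), φ(c_j)⟩ equals (q−1)n if i = j and equals 0 if i ≠ j. In particular, for a uniformly random t ∈ F_q^k and distinct i ≠ j ∈ F_q^k, the probability that ⟨t,i⟩ ≠ ⟨t,j⟩ equals 1 − 1/q. -/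
/-!
Summing over the characters first, the inner product at one coordinate of two codewords is
`∑ α ∈ {1, …, q-1}, ω^{(a-b)α} = q·[a = b] - 1` (`sum_simplex_coord`).  For `i ≠ j`, the two
codewords agree at a given coordinate exactly when the nonzero linear form `G ↦ ((i - j)G)_l`
vanishes, and a surjective additive map onto `F` vanishes on a fraction `1/q` of its domain
(`card_zero_mul_card`).  Hence the expectation at each coordinate is `q·(1/q) - 1 = 0`, whichever
bijection `F ≃ Fin q` is used.  The probability claim is the same count for the form
`t ↦ ⟨t, i - j⟩`.
-/

open Finset
open scoped BigOperators Classical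

noncomputable section

/-- The primitive `q`-th root of unity `ω = e^{2πi/q}`. -/
def rootOfUnityC (q : ℕ) : ℂ := Complex.exp (2 * Real.pi * Complex.I / q)

/-- The simplex encoding of a word `x ∈ F^n`, where the alphabet `F` is identified with
`{0, …, q-1}` via the (arbitrary) bijection `e`.  The coordinate indexed by `(i, α)` is
`ω^{x_i·(α+1)}` for `i ∈ [n]`, `α + 1 ∈ {1, …, q-1}`. -/
def simplexEnc {F : Type*} {q n : ℕ} (e : F ≃ Fin q) (x : Fin n → F) :
    Fin n × Fin (q - 1) → ℂ :=
  fun p => rootOfUnityC q ^ ((e (x p.1)).val * (p.2.val + 1))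

/-- The zero fibre of a surjective additive map onto `F` has relative size `1 / |F|`, because all
fibres have the same size. -/
lemma card_zero_mul_card {V F : Type*} [AddGroup V] [Fintype V] [AddGroup F] [Fintype F] [DecidableEq F]
    (f : V →+ F) (hf : Function.Surjective f) :
    (univ.filter fun v => f v = 0).card * Fintype.card F = Fintype.card V := by
  have h := Finset.card_eq_sum_card_fiberwise (f := f) (s := univ) (t := univ)
    (fun _ _ => by simp)
  have h2 : ∀ b ∈ (univ : Finset F), (univ.filter fun v => f v = b).card
      = (univ.filter fun v => f v = 0).card := fun b _ =>
    AddMonoidHom.card_fiber_eq_of_mem_range f (hf b) (hf 0)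
  rw [Finset.sum_congr rfl h2, Finset.sum_const, Finset.card_univ, Finset.card_univ] at h
  rw [h, smul_eq_mul, mul_comm]

lemma exists_dot_eq {k : ℕ} {F : Type*} [Field F] {d : Fin k → F} (hd : d ≠ 0) (y : F) :
    ∃ t : Fin k → F, ∑ a, t a * d a = y := by
  obtain ⟨a, ha⟩ := Function.ne_iff.mp hd
  refine ⟨Pi.single a (y / d a), ?_⟩
  rw [Finset.sum_eq_single a]
  · simpa using div_mul_cancel₀ y ha
  · intro b _ hb
    simp [hb]
  · simp

/-- The fraction of `t ∈ F^k` with `⟨t, i⟩ = ⟨t, j⟩` is `1 / |F|`. -/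
lemma card_dot_eq {k : ℕ} {F : Type*} [Field F] [Fintype F] [DecidableEq F]
    {i j : Fin k → F} (hij : i ≠ j) :
    (univ.filter fun t : Fin k → F => ∑ a, t a * i a = ∑ a, t a * j a).card * Fintype.card F
      = Fintype.card (Fin k → F) := by
  let f : (Fin k → F) →+ F := AddMonoidHom.mk' (fun t => ∑ a, t a * (i - j) a) (by
    intro s t
    simp [add_mul, Finset.sum_add_distrib])
  rw [← card_zero_mul_card f (exists_dot_eq (sub_ne_zero.mpr hij))]
  congr 2
  ext t
  simp [f, mul_sub, sub_eq_zero]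

/-- The fraction of matrices `G` for which the codewords `iG` and `jG` agree at coordinate `l` is
`1 / |F|`. -/
lemma card_vecMul_eq {k n : ℕ} {F : Type*} [Field F] [Fintype F] [DecidableEq F]
    {i j : Fin k → F} (hij : i ≠ j)
    (l : Fin n) :
    (univ.filter fun G : Matrix (Fin k) (Fin n) F =>
        Matrix.vecMul i G l = Matrix.vecMul j G l).card * Fintype.card F
      = Fintype.card (Matrix (Fin k) (Fin n) F) := by
  let f : Matrix (Fin k) (Fin n) F →+ F := AddMonoidHom.mk' (fun G => Matrix.vecMul (i - j) G l) (by
    intro s t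
    simp [Matrix.vecMul_add])
  have hf : Function.Surjective f := by
    intro y
    obtain ⟨t, ht⟩ := exists_dot_eq (sub_ne_zero.mpr hij) y
    refine ⟨Matrix.of fun a _ => t a, ?_⟩
    rw [← ht]
    simp [f, Matrix.vecMul, dotProduct, mul_comm]
  rw [← card_zero_mul_card f hf]
  congr 2
  ext G
  simp [f, Matrix.sub_vecMul, sub_eq_zero]

lemma rootOfUnityC_isPrimitiveRoot {q : ℕ} (hq : q ≠ 0) : IsPrimitiveRoot (rootOfUnityC q) q :=
  Complex.isPrimitiveRoot_exp q hq

/-- The simplex encodings of two symbols have inner product `q·[a = b] - 1`. -/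
lemma sum_simplex_coord {q : ℕ} (a b : Fin q) :
    ∑ α : Fin (q - 1), rootOfUnityC q ^ (a.val * (α.val + 1)) *
        (starRingEnd ℂ) (rootOfUnityC q ^ (b.val * (α.val + 1)))
      = (q : ℂ) * (if a = b then 1 else 0) - 1 := by
  have hq : q ≠ 0 := by
    have := a.isLt
    lia
  have hω := rootOfUnityC_isPrimitiveRoot hq
  set ω := rootOfUnityC q
  have hconj : (starRingEnd ℂ) ω * ω = 1 := by
    rw [← Complex.normSq_eq_conj_mul_self, Complex.normSq_eq_norm_sq, hω.norm'_eq_one hq]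
    simp
  set z := ω ^ a.val * (starRingEnd ℂ) ω ^ b.val with hz
  have hzb : z * ω ^ b.val = ω ^ a.val := by
    rw [hz, mul_assoc, ← mul_pow, hconj, one_pow, mul_one]
  have hterm : ∀ α : Fin (q - 1), ω ^ (a.val * (α.val + 1)) *
      (starRingEnd ℂ) (ω ^ (b.val * (α.val + 1))) = z ^ (α.val + 1) := by
    intro α
    rw [hz, mul_pow, ← pow_mul, ← pow_mul, map_pow]
  rw [Finset.sum_congr rfl fun α _ => hterm α, Fin.sum_univ_eq_sum_range fun m => z ^ (m + 1)]
  -- Adding the trivial character `α = 0` completes the geometric sum over `range q`.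
  have hfull : ∑ m ∈ range (q - 1), z ^ (m + 1) + 1 = ∑ m ∈ range q, z ^ m := by
    obtain ⟨r, rfl⟩ := Nat.exists_eq_succ_of_ne_zero hq
    rw [Finset.sum_range_succ']
    simp
  rw [eq_sub_iff_add_eq, hfull]
  split_ifs with hab
  · have h1 : z = 1 := by
      subst hab
      rw [hz, ← mul_pow, mul_comm ω, hconj, one_pow]
    simp [h1]
  · have h1 : z ≠ 1 := by
      intro h
      rw [h, one_mul] at hzb
      exact hab (Fin.ext (hω.pow_inj b.isLt a.isLt hzb).symm)
    have hzq : z ^ q = 1 := by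
      rw [hz, mul_pow, ← pow_mul, ← pow_mul, mul_comm a.val, mul_comm b.val, pow_mul, pow_mul,
        ← map_pow, hω.pow_eq_one]
      simp
    rw [geom_sum_eq h1, hzq]
    simp

/-- let `G` be a uniformly random `k × n` matrix over the field `F` with `q`
elements (`q` a prime power).  For messages `i, j ∈ F^k` with codewords `c_i = iG`, `c_j = jG`,
the expected inner product `E⟨φ(c_i), φ(c_j)⟩` equals `(q-1)n` if `i = j` and `0` otherwise.
Moreover, for a uniformly random `t ∈ F^k` and `i ≠ j`, the probability that `⟨t,i⟩ ≠ ⟨t,j⟩`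
equals `1 - 1/q`. -/
theorem stmt3 (q k n : ℕ) (hk : 1 ≤ k) (hn : 1 ≤ n)
    (F : Type) [Field F] [Fintype F] [DecidableEq F] (hq : Fintype.card F = q)
    (e : F ≃ Fin q) (i j : Fin k → F) :
    ((∑ G : Matrix (Fin k) (Fin n) F,
        ∑ p : Fin n × Fin (q - 1),
          simplexEnc e (Matrix.vecMul i G) p *
            (starRingEnd ℂ) (simplexEnc e (Matrix.vecMul j G) p)) /
          (Fintype.card (Matrix (Fin k) (Fin n) F) : ℂ)
        = if i = j then ((q : ℂ) - 1) * n else 0)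
    ∧ (i ≠ j →
        ((Finset.univ.filter fun t : Fin k → F => ∑ a, t a * i a ≠ ∑ a, t a * j a).card : ℝ) /
            (Fintype.card (Fin k → F) : ℝ)
          = 1 - 1 / q) := by
  subst hq
  have hF : (Fintype.card F) ≠ 0 := Fintype.card_ne_zero
  refine ⟨?_, fun hij => ?_⟩
  · rw [div_eq_iff (by exact_mod_cast Fintype.card_ne_zero)]
    have hG : ∀ G : Matrix (Fin k) (Fin n) F, (∑ p : Fin n × Fin (Fintype.card F - 1),
          simplexEnc e (Matrix.vecMul i G) p *
            (starRingEnd ℂ) (simplexEnc e (Matrix.vecMul j G) p))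
        = ∑ l : Fin n, ((Fintype.card F : ℂ) *
            (if Matrix.vecMul i G l = Matrix.vecMul j G l then 1 else 0) - 1) := by
      intro G
      rw [Fintype.sum_prod_type]
      refine Finset.sum_congr rfl fun l _ => ?_
      simp only [simplexEnc]
      rw [sum_simplex_coord]
      simp only [e.injective.eq_iff]
    rw [Finset.sum_congr rfl fun G _ => hG G]
    split_ifs with hij
    · subst hij
      simp only [if_true, Finset.sum_const, Finset.card_univ, nsmul_eq_mul, Fintype.card_fin]
      ring
    · rw [Finset.sum_comm, zero_mul]
      refine Finset.sum_eq_zero fun l _ => ?_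
      rw [Finset.sum_sub_distrib, ← Finset.mul_sum, Finset.sum_boole, Finset.sum_const,
        Finset.card_univ, nsmul_eq_mul, mul_one, sub_eq_zero, mul_comm]
      exact_mod_cast card_vecMul_eq hij l
  · have h := card_dot_eq hij
    have hc := Finset.card_filter_add_card_filter_not (s := (univ : Finset (Fin k → F)))
      (fun t : Fin k → F => ∑ a, t a * i a = ∑ a, t a * j a)
    rw [Finset.card_univ] at hc
    have hF' : (Fintype.card F : ℝ) ≠ 0 := by exact_mod_cast hF
    have hV : (Fintype.card (Fin k → F) : ℝ) ≠ 0 := by exact_mod_cast Fintype.card_ne_zero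
    have h' := congrArg (Nat.cast : ℕ → ℝ) h
    have hc' := congrArg (Nat.cast : ℕ → ℝ) hc
    simp only [Nat.cast_mul, Nat.cast_add] at h' hc'
    rw [div_eq_iff hV]
    have h2 := eq_div_of_mul_eq hF' h'
    rw [h2] at hc'
    rw [sub_mul, one_mul, one_div_mul_eq_div]
    convert eq_sub_of_add_eq' hc' using 3
end
end

section
/- There is an absolute constant C' > 0 such that the following holds. Let q be a prime power, L ≥ 2, η ∈ [0,1], and let C = {c_1, …, c_N} ⊆ F_q^{n'} be a linear code (N ≥ 2) such that for every subset Λ ⊆ {1,…,N} with |Λ| = L, (1/binom(L,2))·Σ_{i<j ∈ Λ} d(c_i, c_j) ≥ (1 − 1/q)(1 − η). Set ε = √(4(1/L + η(1 − 1/L))). Then for every integer n ≥ C'·ln(N)/ε², the randomly punctured code E of length n obtained from C is ((1 − 1/q)(1 − ε), L − 1)-list decodable with probability at least 1 − 1/N. -/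
/-!
A list-decoding failure of the punctured code at `T` is a set `Λ` of `L` codewords all close to one
word `w`.  For such a `Λ` let `g_t ∈ ℝ^q` be its centred symbol count at coordinate `t` (`profile`).
Since `g_t` is orthogonal to the constants, closeness to `w` forces
`∑ j, ‖g_{T j}‖ ≥ √(1 - 1/q) · n L ε`, whereas the hypothesis on pairwise distances gives, as in the
Johnson bound, `E_t ‖g_t‖ ≤ √(1 - 1/q) · L ε / 2` (`johnson_second_moment`).  So a failure is a large
deviation of an empirical mean, and it must be excluded for all `Λ` simultaneously.

A union bound over the `Λ`'s would lose a factor `L` in `n`.  Instead `‖g_t‖` is replaced by its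
random projection `|⟨σ, g_t⟩|`, with `σ` uniform in `{±1}^q`: by Khintchine's inequality this loses a
factor `√3 < 2`, so a gap remains (`deviation_lower`).  For fixed `σ`, symmetrization and the
contraction principle remove the absolute value (`supExp_step`, `supExp_iterate`), and what is left,
`∑_{i ∈ Λ} ∑_j ± ⟨σ, e_{c_i(T_j)} - 1/q⟩`, is linear in `Λ`, hence at most `L` times the maximum over
the `N` codewords.  A union bound over codewords and Hoeffding's estimate `cosh x ≤ exp (x²/2)` bound
the exponential moment by `N exp (8 n l² L²)` (`mgf_bound`).  Jensen's inequality over `σ` and Markov's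
inequality then show that the failing `T` have probability at most `N exp (-n ε² / 51200) ≤ 1/N`
(`bad_card_le`).
-/

open Finset
open scoped BigOperators Classical

noncomputable section

/-! ### Rademacher sums and Khintchine's inequality -/

/-- The sign vector encoded by a subset `A`: `+1` on `A` and `-1` off `A`.  A uniformly random
`A` gives independent uniform signs. -/
def radSign {α : Type*} (A : Finset α) (x : α) : ℝ := if x ∈ A then 1 else -1

/-- Second and fourth moments of a Rademacher sum `X = ∑ x ∈ s, ± g x`:
`E X² = ∑ g²` and `E X⁴ ≤ 3 (∑ g²)²`, by adding one coordinate at a time. -/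
lemma rad_moments {α : Type*} (g : α → ℝ) (s : Finset α) :
    ∑ A ∈ s.powerset, (∑ x ∈ s, radSign A x * g x) ^ 2 = 2 ^ #s * ∑ x ∈ s, g x ^ 2 ∧
    ∑ A ∈ s.powerset, (∑ x ∈ s, radSign A x * g x) ^ 4
      ≤ 2 ^ #s * (3 * (∑ x ∈ s, g x ^ 2) ^ 2) := by
  induction s using Finset.induction_on with
  | empty => simp
  | insert a s ha ih =>
    obtain ⟨h2, h4⟩ := ih
    have e1 : ∀ A ∈ s.powerset, ∑ x ∈ insert a s, radSign A x * g x
        = (∑ x ∈ s, radSign A x * g x) - g a := by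
      intro A hA
      have : a ∉ A := fun h => ha (mem_powerset.1 hA h)
      rw [sum_insert ha, radSign, if_neg this]; ring
    have e2 : ∀ A ∈ s.powerset, ∑ x ∈ insert a s, radSign (insert a A) x * g x
        = (∑ x ∈ s, radSign A x * g x) + g a := by
      intro A hA
      rw [sum_insert ha, radSign, if_pos (mem_insert_self a A), one_mul, add_comm]
      congr 1
      refine sum_congr rfl fun x hx => ?_
      have : x ≠ a := fun h => ha (h ▸ hx)
      simp [radSign, this]
    have hc : ((#s.powerset : ℕ) : ℝ) = 2 ^ #s := by simp
    have key : ∀ p : ℕ, ∑ A ∈ (insert a s).powerset, (∑ x ∈ insert a s, radSign A x * g x) ^ p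
        = ∑ A ∈ s.powerset, (((∑ x ∈ s, radSign A x * g x) - g a) ^ p
          + ((∑ x ∈ s, radSign A x * g x) + g a) ^ p) := by
      intro p
      rw [sum_powerset_insert ha, sum_add_distrib]
      congr 1
      · exact sum_congr rfl fun A hA => by rw [e1 A hA]
      · exact sum_congr rfl fun A hA => by rw [e2 A hA]
    rw [key, key, card_insert_of_notMem ha, sum_insert ha]
    constructor
    · have : ∀ A ∈ s.powerset, (((∑ x ∈ s, radSign A x * g x) - g a) ^ 2
          + ((∑ x ∈ s, radSign A x * g x) + g a) ^ 2)
          = 2 * (∑ x ∈ s, radSign A x * g x) ^ 2 + 2 * g a ^ 2 := fun A _ => by ring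
      rw [sum_congr rfl this, sum_add_distrib, ← mul_sum, h2, sum_const, nsmul_eq_mul, hc]
      ring
    · have : ∀ A ∈ s.powerset, (((∑ x ∈ s, radSign A x * g x) - g a) ^ 4
          + ((∑ x ∈ s, radSign A x * g x) + g a) ^ 4)
          = 2 * (∑ x ∈ s, radSign A x * g x) ^ 4
            + 12 * g a ^ 2 * (∑ x ∈ s, radSign A x * g x) ^ 2 + 2 * g a ^ 4 :=
        fun A _ => by ring
      rw [sum_congr rfl this, sum_add_distrib, sum_add_distrib, ← mul_sum, ← mul_sum, h2,
        sum_const, nsmul_eq_mul, hc]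
      have hp : (0 : ℝ) ≤ 2 ^ #s * g a ^ 4 := by positivity
      rw [pow_succ (2 : ℝ)]
      linarith

/-- Khintchine's inequality `‖g‖₂ ≤ √3 · E |∑ ± g x|`, the expectation being written as a sum
over all `2 ^ card α` sign vectors. -/
lemma khintchine_lower {α : Type*} [Fintype α] (g : α → ℝ) :
    2 ^ Fintype.card α * √(∑ x, g x ^ 2)
      ≤ √3 * ∑ A : Finset α, |∑ x, radSign A x * g x| := by
  obtain ⟨h2, h4⟩ := rad_moments g Finset.univ
  rw [powerset_univ] at h2 h4
  rw [card_univ] at h2 h4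
  set S := ∑ x, g x ^ 2 with hS
  have hS0 : 0 ≤ S := sum_nonneg fun _ _ => sq_nonneg _
  set s := √S with hs
  have hss : s ^ 2 = S := Real.sq_sqrt hS0
  have hs0 : 0 ≤ s := Real.sqrt_nonneg _
  rcases hs0.eq_or_lt with h0 | hpos
  · rw [← h0, mul_zero]; positivity
  have h3 : (√3) ^ 2 = (3 : ℝ) := Real.sq_sqrt (by norm_num)
  have h30 : 0 < √3 := by positivity
  -- Tangency at `|x| = √3 s` of `6√3 s³ |x|` and `9 s² x² - x⁴`; taking expectations
  -- bounds `E |x|` from below by the second and fourth moments.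
  have pt : ∀ x : ℝ, 9 * s ^ 2 * x ^ 2 - x ^ 4 ≤ 6 * √3 * s ^ 3 * |x| := by
    intro x
    have e : 6 * √3 * s ^ 3 * |x| - (9 * s ^ 2 * |x| ^ 2 - |x| ^ 4)
        = |x| * ((|x| - √3 * s) ^ 2 * (|x| + 2 * √3 * s)) := by
      have : √3 ^ 3 = 3 * √3 := by rw [pow_succ, h3]
      ring_nf
      rw [this, h3]; ring
    have : 0 ≤ |x| * ((|x| - √3 * s) ^ 2 * (|x| + 2 * √3 * s)) := by positivity
    rw [← e, sq_abs, show |x| ^ 4 = x ^ 4 from (by decide : Even 4).pow_abs x] at this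
    linarith
  have hsum := sum_le_sum fun (A : Finset α) (_ : A ∈ univ) => pt (∑ x, radSign A x * g x)
  rw [sum_sub_distrib, ← mul_sum, ← mul_sum, h2] at hsum
  set Y := ∑ A : Finset α, |∑ x, radSign A x * g x|
  set M : ℝ := 2 ^ Fintype.card α
  rw [← hss] at hsum h4
  have : 6 * s ^ 3 * (M * s) ≤ 6 * s ^ 3 * (√3 * Y) := by nlinarith
  exact le_of_mul_le_mul_left this (by positivity)

lemma khintchine_upper {α : Type*} [Fintype α] (g : α → ℝ) :
    ∑ A : Finset α, |∑ x, radSign A x * g x|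
      ≤ 2 ^ Fintype.card α * √(∑ x, g x ^ 2) := by
  obtain ⟨h2, -⟩ := rad_moments g Finset.univ
  rw [powerset_univ, card_univ] at h2
  have hS0 : 0 ≤ ∑ x, g x ^ 2 := sum_nonneg fun _ _ => sq_nonneg _
  refine abs_le_of_sq_le_sq' ?_ (by positivity) |>.2
  have := sq_sum_le_card_mul_sum_sq (s := (univ : Finset (Finset α)))
    (f := fun A => |∑ x, radSign A x * g x|)
  simp only [sq_abs, h2, card_univ, Fintype.card_finset] at this
  rw [mul_pow, Real.sq_sqrt hS0]
  push_cast at this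
  linarith

/-! ### Symmetrization and contraction for exponential suprema -/

/-- `supExp S hS f = max_{k ∈ S} exp (f k)`, the exponential of the supremum of a finite process. -/
def supExp {K : Type*} (S : Finset K) (hS : S.Nonempty) (f : K → ℝ) : ℝ :=
  S.sup' hS fun k => Real.exp (f k)

section
variable {K : Type*} {S : Finset K} {hS : S.Nonempty}

lemma exp_le_supExp (f : K → ℝ) {k : K} (hk : k ∈ S) : Real.exp (f k) ≤ supExp S hS f :=
  le_sup' (fun k => Real.exp (f k)) hk

lemma supExp_le {f : K → ℝ} {b : ℝ} (h : ∀ k ∈ S, Real.exp (f k) ≤ b) : supExp S hS f ≤ b :=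
  sup'_le _ _ h

/-- Contraction principle for the absolute value, one sign at a time: `|v|` may be replaced by
`v`, since the first term is at most the maximum and the second at most the minimum of the two
terms on the right. -/
lemma supExp_contraction (f v : K → ℝ) :
    supExp S hS (fun k => f k + |v k|) + supExp S hS (fun k => f k - |v k|)
      ≤ supExp S hS (fun k => f k + v k) + supExp S hS (fun k => f k - v k) := by
  have h1 : supExp S hS (fun k => f k + |v k|)
      ≤ max (supExp S hS (fun k => f k + v k)) (supExp S hS (fun k => f k - v k)) := by
    refine supExp_le fun k hk => ?_
    rcases abs_choice (v k) with h | h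
    · rw [h]; exact le_max_of_le_left (exp_le_supExp (fun k => f k + v k) hk)
    · rw [h]; exact le_max_of_le_right (exp_le_supExp (fun k => f k - v k) hk)
  have h2 : supExp S hS (fun k => f k - |v k|)
      ≤ min (supExp S hS (fun k => f k + v k)) (supExp S hS (fun k => f k - v k)) := by
    refine supExp_le fun k hk => le_min ?_ ?_
    · refine le_trans (Real.exp_le_exp.2 ?_) (exp_le_supExp (fun k => f k + v k) hk)
      linarith [neg_abs_le (v k)]
    · refine le_trans (Real.exp_le_exp.2 ?_) (exp_le_supExp (fun k => f k - v k) hk)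
      linarith [le_abs_self (v k)]
  have := max_add_min (supExp S hS (fun k => f k + v k)) (supExp S hS (fun k => f k - v k))
  linarith

/-- Jensen's inequality for `exp` and the uniform distribution on `τ`. -/
lemma exp_mean_le {τ : Type*} [Fintype τ] [Nonempty τ] (u : τ → ℝ) :
    Real.exp ((∑ t, u t) / Fintype.card τ) ≤ (∑ t, Real.exp (u t)) / Fintype.card τ := by
  have hc : (0 : ℝ) < Fintype.card τ := by exact_mod_cast Fintype.card_pos
  have := convexOn_exp.map_sum_le (t := (univ : Finset τ)) (w := fun _ => (Fintype.card τ : ℝ)⁻¹)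
    (p := u) (fun _ _ => by positivity) (by simp) (fun _ _ => Set.mem_univ _)
  simp only [smul_eq_mul, ← mul_sum] at this
  rw [div_eq_inv_mul, div_eq_inv_mul]; exact this

/-- Symmetrization and contraction for one random sample: averaged over `t`, the centred increment
`|v t| - E |v|` costs no more than the signed increment `±2 v t`, whatever the offset `f`. -/
lemma supExp_step {τ : Type*} [Fintype τ] [Nonempty τ] (f : K → ℝ) (v : τ → K → ℝ) :
    ∑ t, supExp S hS (fun k => f k + (|v t k| - (∑ t', |v t' k|) / Fintype.card τ))
      ≤ 1 / 2 * ∑ e : τ × Bool,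
        supExp S hS (fun k => f k + 2 * ((if e.2 then 1 else -1) * v e.1 k)) := by
  have hc : (0 : ℝ) < Fintype.card τ := by exact_mod_cast Fintype.card_pos
  set P : τ → ℝ := fun t => supExp S hS (fun k => f k + 2 * |v t k|) with hP
  set M : τ → ℝ := fun t => supExp S hS (fun k => f k - 2 * |v t k|) with hM
  have h1 : ∀ t, supExp S hS (fun k => f k + (|v t k| - (∑ t', |v t' k|) / Fintype.card τ))
      ≤ (∑ t', (P t + M t') / 2) / Fintype.card τ := by
    intro t
    refine supExp_le fun k hk => ?_
    have e : f k + (|v t k| - (∑ t', |v t' k|) / Fintype.card τ)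
        = (∑ t', (f k + |v t k| - |v t' k|)) / Fintype.card τ := by
      rw [sum_sub_distrib, sum_const, card_univ, nsmul_eq_mul]; field_simp; ring
    rw [e]
    refine (exp_mean_le _).trans ?_
    -- For `u` the second sample, `f + |v t| - |v u|` is the midpoint of `f + 2 |v t|` and `f - 2 |v u|`.
    gcongr with t' _
    have a1 : Real.exp (f k + 2 * |v t k|) ≤ P t := exp_le_supExp (fun k => f k + 2 * |v t k|) hk
    have a2 : Real.exp (f k - 2 * |v t' k|) ≤ M t' :=
      exp_le_supExp (fun k => f k - 2 * |v t' k|) hk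
    have b1 : Real.exp (f k + 2 * |v t k|) = Real.exp (f k / 2 + |v t k|) ^ 2 := by
      rw [← Real.exp_nat_mul]; congr 1; push_cast; ring
    have b2 : Real.exp (f k - 2 * |v t' k|) = Real.exp (f k / 2 - |v t' k|) ^ 2 := by
      rw [← Real.exp_nat_mul]; congr 1; push_cast; ring
    have b3 : Real.exp (f k + |v t k| - |v t' k|)
        = Real.exp (f k / 2 + |v t k|) * Real.exp (f k / 2 - |v t' k|) := by
      rw [← Real.exp_add]; congr 1; ring
    nlinarith [sq_nonneg (Real.exp (f k / 2 + |v t k|) - Real.exp (f k / 2 - |v t' k|))]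
  have h2 : ∀ t, P t + M t ≤ ∑ b : Bool,
      supExp S hS (fun k => f k + 2 * ((if b then 1 else -1) * v t k)) := by
    intro t
    have := supExp_contraction (S := S) (hS := hS) f (fun k => 2 * v t k)
    simp only [abs_mul, abs_two] at this
    rw [Fintype.sum_bool]
    refine this.trans (le_of_eq ?_)
    congr 2 <;> funext k
    · simp
    · simp; ring
  rw [Fintype.sum_prod_type]
  calc _ ≤ ∑ t, (∑ t', (P t + M t') / 2) / Fintype.card τ := sum_le_sum fun t _ => h1 t
    _ = 1 / 2 * ∑ t, (P t + M t) := by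
      simp only [← sum_div, sum_add_distrib, sum_const, card_univ, nsmul_eq_mul, ← mul_sum]
      field_simp
    _ ≤ _ := by
      gcongr with t _
      exact h2 t

lemma sum_fin_succ_fun {ι : Type*} [Fintype ι] {n : ℕ} (G : (Fin (n + 1) → ι) → ℝ) :
    ∑ T, G T = ∑ T : Fin n → ι, ∑ t, G (Fin.cons t T) := by
  rw [sum_comm, ← Fintype.sum_prod_type' (f := fun t (T : Fin n → ι) => G (Fin.cons t T))]
  exact (Fintype.sum_equiv (Fin.consEquiv fun _ => ι) _ _ fun p => rfl).symm

/-- A one-sample comparison valid for every offset `f` extends to `n` independent samples, by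
replacing the samples one by one. -/
lemma supExp_iterate {τ ι : Type*} [Fintype τ] [Fintype ι] (h : τ → K → ℝ) (w : ι → K → ℝ)
    (r : ℝ) (hr : 0 ≤ r)
    (step : ∀ f : K → ℝ, ∑ t, supExp S hS (fun k => f k + h t k)
      ≤ r * ∑ e, supExp S hS (fun k => f k + w e k)) (n : ℕ) :
    ∀ f : K → ℝ, ∑ T : Fin n → τ, supExp S hS (fun k => f k + ∑ j, h (T j) k)
      ≤ r ^ n * ∑ U : Fin n → ι, supExp S hS (fun k => f k + ∑ j, w (U j) k) := by
  induction n with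
  | zero => intro f; simp
  | succ n ih =>
    intro f
    rw [sum_fin_succ_fun, sum_fin_succ_fun]
    simp only [Fin.sum_univ_succ, Fin.cons_zero, Fin.cons_succ]
    calc ∑ T : Fin n → τ, ∑ t, supExp S hS (fun k => f k + (h t k + ∑ j, h (T j) k))
        = ∑ t, ∑ T : Fin n → τ, supExp S hS (fun k => (f k + h t k) + ∑ j, h (T j) k) := by
          rw [sum_comm]; simp only [add_assoc]
      _ ≤ ∑ t, r ^ n * ∑ U : Fin n → ι, supExp S hS (fun k => (f k + h t k) + ∑ j, w (U j) k) :=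
          sum_le_sum fun t _ => ih _
      _ = r ^ n * ∑ U : Fin n → ι, ∑ t, supExp S hS (fun k => (f k + ∑ j, w (U j) k) + h t k) := by
          rw [← mul_sum, sum_comm]; simp only [add_right_comm]
      _ ≤ r ^ n * ∑ U : Fin n → ι, r * ∑ e, supExp S hS (fun k => (f k + ∑ j, w (U j) k) + w e k) := by
          gcongr with U _
          exact step _
      _ = _ := by
          rw [← mul_sum, ← mul_assoc, pow_succ]
          congr 1
          refine sum_congr rfl fun U _ => sum_congr rfl fun e _ => ?_
          congr 1; funext k; ring

end

/-- A sum over `L` indices is at most `L` times its largest term, so the supremum over all lists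
costs a union bound over single indices only, not over `L`-subsets. -/
lemma supExp_sum_le {I : Type*} [Fintype I] {L : ℕ} (hL : 1 ≤ L) {S : Finset (Finset I)}
    {hS : S.Nonempty} (hcard : ∀ Λ ∈ S, #Λ = L) (y : I → ℝ) :
    supExp S hS (fun Λ => ∑ i ∈ Λ, y i) ≤ ∑ i, Real.exp (L * y i) := by
  refine supExp_le fun Λ hΛ => ?_
  have hne : Λ.Nonempty := card_pos.1 (by rw [hcard Λ hΛ]; omega)
  obtain ⟨m, -, hm⟩ := exists_max_image Λ y hne
  have h1 : ∑ i ∈ Λ, y i ≤ L * y m := by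
    have := sum_le_card_nsmul Λ y (y m) hm
    rwa [hcard Λ hΛ, nsmul_eq_mul] at this
  refine (Real.exp_le_exp.2 h1).trans ?_
  exact single_le_sum (f := fun i => Real.exp (L * y i)) (fun i _ => (Real.exp_pos _).le)
    (mem_univ m)

/-- Exponential moment of the largest deviation, over lists `Λ` of size `L`, of
`∑ j, |∑ i ∈ Λ, s (T j) i|` from its mean.  The factor in front is the number of codewords rather
than the number of lists; this is what permits `n` of order `log N / ε²`. -/
lemma mgf_bound {I τ : Type*} [Fintype I] [Fintype τ] [Nonempty τ] {L : ℕ} (hL : 1 ≤ L)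
    {S : Finset (Finset I)} {hS : S.Nonempty} (hcard : ∀ Λ ∈ S, #Λ = L)
    (s : τ → I → ℝ) (hs : ∀ t i, |s t i| ≤ 2) (l : ℝ) (hl : 0 ≤ l) (n : ℕ) :
    ∑ T : Fin n → τ, supExp S hS (fun Λ => l * ∑ j,
        (|∑ i ∈ Λ, s (T j) i| - (∑ t, |∑ i ∈ Λ, s t i|) / Fintype.card τ))
      ≤ Fintype.card I * ((Fintype.card τ : ℝ) ^ n * Real.exp (8 * n * l ^ 2 * L ^ 2)) := by
  have hstep := supExp_iterate (S := S) (hS := hS)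
    (h := fun (t : τ) (Λ : Finset I) => |l * ∑ i ∈ Λ, s t i|
      - (∑ t', |l * ∑ i ∈ Λ, s t' i|) / Fintype.card τ)
    (w := fun (e : τ × Bool) Λ => 2 * ((if e.2 then 1 else -1) * (l * ∑ i ∈ Λ, s e.1 i)))
    (1 / 2) (by norm_num)
    (fun f => supExp_step f (fun t Λ => l * ∑ i ∈ Λ, s t i)) n 0
  have e1 : ∀ (T : Fin n → τ) (Λ : Finset I), l * ∑ j,
        (|∑ i ∈ Λ, s (T j) i| - (∑ t, |∑ i ∈ Λ, s t i|) / Fintype.card τ)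
      = (0 : Finset I → ℝ) Λ + ∑ j, (|l * ∑ i ∈ Λ, s (T j) i|
      - (∑ t', |l * ∑ i ∈ Λ, s t' i|) / Fintype.card τ) := by
    intro T Λ
    simp only [abs_mul, abs_of_nonneg hl, ← mul_sum, Pi.zero_apply, zero_add, mul_div_assoc,
      ← mul_sub]
  simp only [e1]
  refine hstep.trans ?_
  have e2 : ∀ (U : Fin n → τ × Bool), supExp S hS (fun Λ => (0 : Finset I → ℝ) Λ +
        ∑ j, 2 * ((if (U j).2 then 1 else -1) * (l * ∑ i ∈ Λ, s (U j).1 i)))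
      ≤ ∑ i, ∏ j, Real.exp ((if (U j).2 then 1 else -1) * (2 * l * L * s (U j).1 i)) := by
    intro U
    have := supExp_sum_le (hS := hS) hL hcard
      (fun i => ∑ j, 2 * ((if (U j).2 then 1 else -1) * (l * s (U j).1 i)))
    refine le_trans (le_of_eq ?_) (this.trans (le_of_eq ?_))
    · congr 1; funext Λ
      rw [Pi.zero_apply, zero_add, sum_comm]
      simp only [mul_sum]
    · refine sum_congr rfl fun i _ => ?_
      rw [← Real.exp_sum, mul_sum]
      congr 1
      refine sum_congr rfl fun j _ => by ring
  have e3 : ∀ i : I, ∑ e : τ × Bool, Real.exp ((if e.2 then 1 else -1) * (2 * l * L * s e.1 i))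
      ≤ Fintype.card τ * (2 * Real.exp (8 * l ^ 2 * L ^ 2)) := by
    intro i
    rw [Fintype.sum_prod_type]
    have : ∀ t ∈ (univ : Finset τ),
        ∑ b : Bool, Real.exp ((if b then 1 else -1) * (2 * l * L * s t i))
        ≤ 2 * Real.exp (8 * l ^ 2 * L ^ 2) := by
      intro t _
      have h1 := Real.cosh_le_exp_half_sq (2 * l * L * s t i)
      have h2 : (2 * l * L * s t i) ^ 2 / 2 ≤ 8 * l ^ 2 * L ^ 2 := by
        have : s t i ^ 2 ≤ 2 ^ 2 := sq_le_sq.2 (by simpa using hs t i)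
        have h3 : 0 ≤ l ^ 2 * (L : ℝ) ^ 2 := by positivity
        nlinarith
      have h4 := Real.exp_le_exp.2 h2
      rw [Real.cosh_eq] at h1
      simp only [Fintype.sum_bool, if_true, one_mul, Bool.false_eq_true, if_false, neg_mul]
      linarith
    have := sum_le_sum this
    rwa [sum_const, card_univ, nsmul_eq_mul] at this
  -- After the union bound the exponential moment of an i.i.d. sum factorizes.
  calc _ ≤ (1 / 2 : ℝ) ^ n * ∑ U : Fin n → τ × Bool, ∑ i,
          ∏ j, Real.exp ((if (U j).2 then 1 else -1) * (2 * l * L * s (U j).1 i)) := by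
        gcongr with U _
        exact e2 U
    _ = (1 / 2 : ℝ) ^ n * ∑ i,
          (∑ e : τ × Bool, Real.exp ((if e.2 then 1 else -1) * (2 * l * L * s e.1 i))) ^ n := by
        rw [sum_comm]
        congr 1
        refine sum_congr rfl fun i _ => ?_
        rw [Fintype.sum_pow]
    _ ≤ (1 / 2 : ℝ) ^ n * ∑ i : I, (Fintype.card τ * (2 * Real.exp (8 * l ^ 2 * L ^ 2))) ^ n := by
        gcongr with i _
        exact e3 i
    _ = _ := by
        rw [sum_const, card_univ, nsmul_eq_mul, mul_pow, mul_pow, ← Real.exp_nat_mul, one_div,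
          inv_pow]
        have : (2 : ℝ) ^ n ≠ 0 := by positivity
        field_simp

/-! ### Profiles of lists and the Johnson bound -/

section
variable {F : Type*} [Fintype F] [DecidableEq F] {I : Type*}

/-- The centred indicator `1[x = a] - 1/q`, where `q` is the alphabet size. -/
def centInd (x a : F) : ℝ := (if x = a then 1 else 0) - 1 / (Fintype.card F : ℝ)

/-- The profile of the list `Λ` at coordinate `t`: the number of codewords of `Λ` with symbol `a`
there, minus the value `|Λ| / q` it would have if the symbols were equidistributed. -/
def profile {τ : Type*} (c : I → τ → F) (Λ : Finset I) (t : τ) (a : F) : ℝ :=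
  ∑ i ∈ Λ, centInd (c i t) a

lemma sum_centInd [Nonempty F] (x : F) : ∑ a, centInd x a = 0 := by
  have : (Fintype.card F : ℝ) ≠ 0 := by exact_mod_cast Fintype.card_ne_zero
  simp [centInd, sum_sub_distrib, this]

lemma sum_centInd_mul [Nonempty F] (x y : F) :
    ∑ a, centInd x a * centInd y a = centInd x y := by
  have h := sum_centInd y
  have : ∀ a, centInd x a * centInd y a
      = (if x = a then centInd y a else 0) - 1 / (Fintype.card F : ℝ) * centInd y a := by
    intro a; rw [centInd]; split_ifs <;> ring
  simp only [this, sum_sub_distrib, ← mul_sum, h, sum_ite_eq, mem_univ, if_true]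
  simp [centInd, eq_comm]

lemma abs_sum_centInd_le [Nonempty F] (A : Finset F) (x : F) :
    |∑ a, radSign A a * centInd x a| ≤ 2 := by
  have hq : (Fintype.card F : ℝ) ≠ 0 := by exact_mod_cast Fintype.card_ne_zero
  calc |∑ a, radSign A a * centInd x a| ≤ ∑ a, |radSign A a * centInd x a| :=
        abs_sum_le_sum_abs _ _
    _ ≤ ∑ a, ((if x = a then 1 else 0) + 1 / (Fintype.card F : ℝ)) := by
        refine sum_le_sum fun a _ => ?_
        have h1 : |radSign A a| = 1 := by unfold radSign; split_ifs <;> simp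
        rw [abs_mul, h1, one_mul, centInd]
        have hp : (0 : ℝ) ≤ 1 / (Fintype.card F : ℝ) := by positivity
        rw [abs_le]; constructor <;> split_ifs <;> linarith
    _ = 2 := by
        rw [sum_add_distrib]; simp [hq]; norm_num

/-- A coordinate of a vector orthogonal to the constants is at most `√(1 - 1/q)` times its
Euclidean norm, by Cauchy–Schwarz on the other `q - 1` coordinates. -/
lemma le_sqrt_of_sum_zero [Nonempty F] (g : F → ℝ) (hg : ∑ a, g a = 0) (a : F) :
    g a ≤ √(1 - 1 / (Fintype.card F : ℝ)) * √(∑ b, g b ^ 2) := by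
  have hq : (0 : ℝ) < Fintype.card F := by exact_mod_cast Fintype.card_pos
  have hq1 : (1 : ℝ) ≤ Fintype.card F := by exact_mod_cast Fintype.card_pos
  have h0 : 0 ≤ 1 - 1 / (Fintype.card F : ℝ) := by
    rw [sub_nonneg, div_le_one hq]; exact hq1
  rw [← Real.sqrt_mul h0]
  refine Real.le_sqrt_of_sq_le ?_
  have h1 := add_sum_erase univ g (mem_univ a)
  have h2 := add_sum_erase univ (fun b => g b ^ 2) (mem_univ a)
  have h3 := sq_sum_le_card_mul_sum_sq (s := univ.erase a) (f := g)
  rw [card_erase_of_mem (mem_univ a), card_univ, Nat.cast_sub Fintype.card_pos] at h3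
  have h4 : ∑ x ∈ univ.erase a, g x = - g a := by linarith
  rw [h4] at h3
  have h5 : ∑ x ∈ univ.erase a, g x ^ 2 = (∑ b, g b ^ 2) - g a ^ 2 := by linarith
  rw [h5] at h3
  have h6 : (Fintype.card F : ℝ) * g a ^ 2
      ≤ Fintype.card F * ((1 - 1 / (Fintype.card F : ℝ)) * ∑ b, g b ^ 2) := by
    have : (Fintype.card F : ℝ) * ((1 - 1 / (Fintype.card F : ℝ)) * ∑ b, g b ^ 2)
        = (Fintype.card F - 1) * ∑ b, g b ^ 2 := by field_simp
    rw [this]; push_cast at h3; linarith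
  exact le_of_mul_le_mul_left h6 hq

lemma sum_profile [Nonempty F] {τ : Type*} (c : I → τ → F) (Λ : Finset I) (t : τ) :
    ∑ a, profile c Λ t a = 0 := by
  simp only [profile]
  rw [sum_comm]; exact sum_eq_zero fun i _ => sum_centInd _

lemma sum_profile_sq [Nonempty F] {τ : Type*} (c : I → τ → F) (Λ : Finset I) (t : τ) :
    ∑ a, profile c Λ t a ^ 2 = ∑ i ∈ Λ, ∑ k ∈ Λ, centInd (c i t) (c k t) := by
  simp only [profile, sq, sum_mul_sum]
  rw [sum_comm]
  refine sum_congr rfl fun i _ => ?_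
  rw [sum_comm]
  exact sum_congr rfl fun k _ => sum_centInd_mul _ _

lemma sum_radSign_profile {τ : Type*} (c : I → τ → F) (Λ : Finset I) (t : τ)
    (A : Finset F) : ∑ a, radSign A a * profile c Λ t a
      = ∑ i ∈ Λ, ∑ a, radSign A a * centInd (c i t) a := by
  simp only [profile, mul_sum]
  rw [sum_comm]

lemma sum_centInd_word {m : ℕ} (hm : 1 ≤ m) (x y : Fin m → F) :
    ∑ t, centInd (x t) (y t) = m * (1 - 1 / (Fintype.card F : ℝ) - relDist x y) := by
  have hm' : (m : ℝ) ≠ 0 := by exact_mod_cast (by omega : m ≠ 0)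
  have h : (hammingDist x y : ℝ) = ∑ t, (1 - if x t = y t then (1 : ℝ) else 0) := by
    rw [hammingDist, card_eq_sum_ones, sum_filter]
    push_cast
    refine sum_congr rfl fun t _ => ?_
    by_cases hxy : x t = y t <;> simp [hxy]
  rw [sum_sub_distrib] at h
  simp only [centInd, sum_sub_distrib, relDist, h]
  simp
  field_simp
  ring

lemma sum_pairs_symm {N : ℕ} (Λ : Finset (Fin N)) (d : Fin N → Fin N → ℝ)
    (hd : ∀ i, d i i = 0) (hsymm : ∀ i j, d i j = d j i) :
    ∑ i ∈ Λ, ∑ k ∈ Λ, d i k = 2 * ∑ i ∈ Λ, ∑ k ∈ Λ.filter (fun k => i < k), d i k := by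
  have h1 : ∀ i k, d i k = (if i < k then d i k else 0) + (if k < i then d k i else 0) := by
    intro i k
    rcases lt_trichotomy i k with h | h | h
    · simp [h, not_lt.2 h.le]
    · simp [h, hd]
    · simp [h, not_lt.2 h.le, hsymm i k]
  simp only [sum_filter]
  calc _ = ∑ i ∈ Λ, ∑ k ∈ Λ, ((if i < k then d i k else 0) + (if k < i then d k i else 0)) :=
        sum_congr rfl fun i _ => sum_congr rfl fun k _ => h1 i k
    _ = (∑ i ∈ Λ, ∑ k ∈ Λ, if i < k then d i k else 0)
        + ∑ i ∈ Λ, ∑ k ∈ Λ, if k < i then d k i else 0 := by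
        simp only [sum_add_distrib]
    _ = _ := by
        rw [sum_comm (f := fun i k => if k < i then d k i else 0)]; ring

/-- The computation behind the Johnson bound: a large average pairwise distance makes the profile
of the list small in mean square over the coordinates. -/
lemma johnson_second_moment [Nonempty F] {N m L : ℕ} (hm : 1 ≤ m) (hL : 2 ≤ L) {η : ℝ}
    (c : Fin N → Fin m → F) (Λ : Finset (Fin N)) (hΛ : #Λ = L)
    (hd : (1 - 1 / (Fintype.card F : ℝ)) * (1 - η) ≤ (1 / (L.choose 2) : ℝ) *
      ∑ i ∈ Λ, ∑ j ∈ Λ.filter (fun j => i < j), relDist (c i) (c j)) :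
    ∑ t, ∑ a, profile c Λ t a ^ 2
      ≤ m * ((1 - 1 / (Fintype.card F : ℝ)) * (L ^ 2 * (1 / L + η * (1 - 1 / L)))) := by
  simp only [sum_profile_sq]
  rw [sum_comm]
  have e : ∀ i ∈ Λ, ∑ t, ∑ k ∈ Λ, centInd (c i t) (c k t)
      = ∑ k ∈ Λ, m * (1 - 1 / (Fintype.card F : ℝ) - relDist (c i) (c k)) := by
    intro i _
    rw [sum_comm]
    exact sum_congr rfl fun k _ => sum_centInd_word hm _ _
  rw [sum_congr rfl e]
  simp only [← mul_sum, sum_sub_distrib, sum_const, hΛ, nsmul_eq_mul]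
  rw [sum_pairs_symm Λ (fun i k => relDist (c i) (c k)) (fun i => by simp [relDist])
    (fun i j => by simp [relDist, hammingDist_comm])]
  set D := ∑ i ∈ Λ, ∑ j ∈ Λ.filter (fun j => i < j), relDist (c i) (c j)
  have hL0 : (0 : ℝ) < L := by exact_mod_cast (by omega : 0 < L)
  have hL1 : (0 : ℝ) < L - 1 := by
    have : (2 : ℝ) ≤ L := by exact_mod_cast hL
    linarith
  have hch : ((L.choose 2 : ℕ) : ℝ) = L * (L - 1) / 2 := Nat.cast_choose_two ℝ L
  rw [hch, one_div_mul_eq_div, le_div_iff₀ (by positivity)] at hd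
  gcongr
  have : (1 - 1 / (Fintype.card F : ℝ)) * (L ^ 2 * (1 / L + η * (1 - 1 / L)))
      = (1 - 1 / (Fintype.card F : ℝ)) * (L + η * (L * (L - 1))) := by
    congr 1; field_simp
  rw [this]
  nlinarith
end

/-! ### Counting bad samples -/

/-- If all codewords of `Λ` are close to `w` on the sampled coordinates `T`, then, averaged over the
sign vectors `A`, the projected profiles `|∑ a, ± profile|` on `T` exceed their mean over all
coordinates by `n L ε / 40`.  The closeness gives `∑ j, ‖profile (T j)‖ ≥ √Q n L ε`, where
`Q = 1 - 1/q`; the second moment gives a mean of at most `√Q L ε / 2`; and Khintchine's constant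
`√3` is less than `2`. -/
lemma deviation_lower {F : Type*} [Fintype F] [DecidableEq F] [Nontrivial F] {N m n L : ℕ}
    (hm : 1 ≤ m) (hn : 1 ≤ n) (c : Fin N → Fin m → F) (Λ : Finset (Fin N)) (hΛ : #Λ = L)
    {ε : ℝ} (hε : 0 ≤ ε)
    (hmom : ∑ t, ∑ a, profile c Λ t a ^ 2
      ≤ m * ((1 - 1 / (Fintype.card F : ℝ)) * (L ^ 2 * (ε ^ 2 / 4))))
    (T : Fin n → Fin m) (w : Fin n → F)
    (hw : ∀ i ∈ Λ, relDist (fun j => c i (T j)) w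
      ≤ (1 - 1 / (Fintype.card F : ℝ)) * (1 - ε)) :
    2 ^ Fintype.card F * (n * L * ε / 40) ≤ ∑ A : Finset F, ∑ j,
      (|∑ a, radSign A a * profile c Λ (T j) a|
        - (∑ t, |∑ a, radSign A a * profile c Λ t a|) / Fintype.card (Fin m)) := by
  set Q : ℝ := 1 - 1 / (Fintype.card F : ℝ) with hQ
  have hq2 : (2 : ℝ) ≤ Fintype.card F := by exact_mod_cast Fintype.one_lt_card
  have hQh : 1 / 2 ≤ Q := by
    have : 1 / (Fintype.card F : ℝ) ≤ 1 / 2 := one_div_le_one_div_of_le (by norm_num) hq2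
    linarith
  have hm0 : (0 : ℝ) < m := by exact_mod_cast hm
  have hn0 : (0 : ℝ) < n := by exact_mod_cast hn
  set u := √Q with hu
  have huu : u ^ 2 = Q := Real.sq_sqrt (by linarith)
  have hu2 : 1 / 2 ≤ u := Real.le_sqrt_of_sq_le (by linarith)
  set r : Fin m → ℝ := fun t => √(∑ a, profile c Λ t a ^ 2) with hr
  have hrr : ∀ t, r t ^ 2 = ∑ a, profile c Λ t a ^ 2 := fun t =>
    Real.sq_sqrt (sum_nonneg fun _ _ => sq_nonneg _)
  have hlow : u * (L * n * ε) ≤ ∑ j, r (T j) := by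
    have h1 : ∑ j, profile c Λ (T j) (w j)
        = ∑ i ∈ Λ, n * (Q - relDist (fun j => c i (T j)) w) := by
      simp only [profile]
      rw [sum_comm]
      exact sum_congr rfl fun i _ => sum_centInd_word hn (fun j => c i (T j)) w
    have h2 : L * (n * (Q * ε)) ≤ ∑ i ∈ Λ, n * (Q - relDist (fun j => c i (T j)) w) := by
      have := card_nsmul_le_sum Λ (fun i => n * (Q - relDist (fun j => c i (T j)) w))
        (n * (Q * ε)) (fun i hi => by
          have := hw i hi
          gcongr
          linarith)
      rwa [hΛ, nsmul_eq_mul] at this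
    have h3 : ∑ j, profile c Λ (T j) (w j) ≤ ∑ j, u * r (T j) :=
      sum_le_sum fun j _ => le_sqrt_of_sum_zero _ (sum_profile c Λ (T j)) (w j)
    rw [← mul_sum] at h3
    have h4 : u * (u * (L * n * ε)) ≤ u * ∑ j, r (T j) := by
      rw [← mul_assoc, ← sq, huu]; linarith
    exact le_of_mul_le_mul_left h4 (by linarith)
  have hup : ∑ t, r t ≤ m * (u * (L * ε / 2)) := by
    refine abs_le_of_sq_le_sq' ?_ (by positivity) |>.2
    have := sq_sum_le_card_mul_sum_sq (s := (univ : Finset (Fin m))) (f := r)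
    simp only [hrr, card_univ, Fintype.card_fin] at this
    refine this.trans ?_
    have h5 := mul_le_mul_of_nonneg_left hmom hm0.le
    refine h5.trans (le_of_eq ?_)
    rw [← huu]; ring
  have h3 : √3 ≤ 20 / 11 := Real.sqrt_le_iff.2 ⟨by norm_num, by norm_num⟩
  have h30 : 0 < √3 := by positivity
  set M : ℝ := 2 ^ Fintype.card F with hM
  have hM0 : 0 < M := by positivity
  have hA : M * ∑ j, r (T j)
      ≤ √3 * ∑ A : Finset F, ∑ j, |∑ a, radSign A a * profile c Λ (T j) a| := by
    rw [sum_comm, mul_sum, mul_sum]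
    exact sum_le_sum fun j _ => khintchine_lower _
  have hB : ∑ A : Finset F, ∑ t, |∑ a, radSign A a * profile c Λ t a| ≤ M * ∑ t, r t := by
    rw [sum_comm, mul_sum]
    exact sum_le_sum fun j _ => khintchine_upper _
  simp only [sum_sub_distrib, sum_const, card_univ, Fintype.card_fin, nsmul_eq_mul, ← mul_sum,
    ← sum_div]
  set X := ∑ A : Finset F, ∑ j, |∑ a, radSign A a * profile c Λ (T j) a|
  set Y := ∑ A : Finset F, ∑ t, |∑ a, radSign A a * profile c Λ t a|
  have hX0 : 0 ≤ X := by positivity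
  have hY : Y / m ≤ M * (u * (L * ε / 2)) := by
    rw [div_le_iff₀ hm0]
    refine hB.trans ((mul_le_mul_of_nonneg_left hup hM0.le).trans (le_of_eq (by ring)))
  have hX : M * (u * (L * n * ε)) ≤ 20 / 11 * X :=
    (mul_le_mul_of_nonneg_left hlow hM0.le).trans
      (hA.trans (mul_le_mul_of_nonneg_right h3 hX0))
  have hYn := mul_le_mul_of_nonneg_left hY hn0.le
  have hfin : 1 / 2 * (M * (n * L * ε)) ≤ u * (M * (n * L * ε)) :=
    mul_le_mul_of_nonneg_right hu2 (by positivity)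
  linarith

/-- The set `B` of samples `T` for which some `L` punctured codewords lie close to a common word has
size at most `N exp (-n ε² / 51200) m ^ n`. -/
lemma bad_card_le {F : Type*} [Fintype F] [DecidableEq F] [Nontrivial F] {N m n L : ℕ}
    (hm : 1 ≤ m) (hn : 1 ≤ n) (hL : 1 ≤ L) (c : Fin N → Fin m → F)
    {ε : ℝ} (hε : 0 ≤ ε)
    (hmom : ∀ Λ : Finset (Fin N), #Λ = L → ∑ t, ∑ a, profile c Λ t a ^ 2
      ≤ m * ((1 - 1 / (Fintype.card F : ℝ)) * (L ^ 2 * (ε ^ 2 / 4))))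
    (B : Finset (Fin n → Fin m))
    (hB : ∀ T ∈ B, ∃ (w : Fin n → F) (Λ : Finset (Fin N)), #Λ = L ∧
      ∀ i ∈ Λ, relDist (fun j => c i (T j)) w ≤ (1 - 1 / (Fintype.card F : ℝ)) * (1 - ε)) :
    (#B : ℝ) * Real.exp (n * ε ^ 2 / 51200) ≤ N * (m : ℝ) ^ n := by
  rcases B.eq_empty_or_nonempty with rfl | hBne
  · simp; positivity
  have : Nonempty (Fin m) := ⟨⟨0, hm⟩⟩
  have hS : (powersetCard L (univ : Finset (Fin N))).Nonempty := by
    obtain ⟨T, hT⟩ := hBne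
    obtain ⟨w, Λ, hΛ, -⟩ := hB T hT
    exact ⟨Λ, by simp [mem_powersetCard, hΛ]⟩
  have hL0 : (0 : ℝ) < L := by exact_mod_cast hL
  -- The minimizer of `8 n l² L² - l n L ε / 40`; the minimum is `-n ε² / 51200`.
  set l : ℝ := ε / (640 * L) with hl
  have hl0 : 0 ≤ l := by positivity
  set M : ℝ := 2 ^ Fintype.card F with hM
  have hM0 : 0 < M := by positivity
  have hMc : (Fintype.card (Finset F) : ℝ) = M := by simp [hM]
  set Z : Finset F → (Fin n → Fin m) → ℝ := fun A T =>
    supExp (powersetCard L (univ : Finset (Fin N))) hS (fun Λ => l * ∑ j,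
      (|∑ i ∈ Λ, ∑ a, radSign A a * centInd (c i (T j)) a|
        - (∑ t, |∑ i ∈ Λ, ∑ a, radSign A a * centInd (c i t) a|) / Fintype.card (Fin m))) with hZ
  have hZsum : ∀ A, ∑ T, Z A T ≤ N * ((m : ℝ) ^ n * Real.exp (8 * n * l ^ 2 * L ^ 2)) := by
    intro A
    have := mgf_bound (I := Fin N) (τ := Fin m) hL (hS := hS)
      (fun Λ h => (mem_powersetCard.1 h).2)
      (fun t i => ∑ a, radSign A a * centInd (c i t) a)
      (fun t i => abs_sum_centInd_le A _) l hl0 n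
    simpa only [hZ, Fintype.card_fin] using this
  have hZpos : ∀ A T, 0 ≤ Z A T := fun A T => by
    obtain ⟨Λ, hΛ⟩ := hS
    exact (Real.exp_pos _).le.trans (exp_le_supExp _ hΛ)
  have hbad : ∀ T ∈ B, M * Real.exp (l * (n * L * ε / 40)) ≤ ∑ A, Z A T := by
    intro T hT
    obtain ⟨w, Λ, hΛ, hw⟩ := hB T hT
    have h1 := deviation_lower hm hn c Λ hΛ hε (hmom Λ hΛ) T w hw
    simp only [sum_radSign_profile] at h1
    have h2 := exp_mean_le (τ := Finset F) (fun A => l * ∑ j,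
      (|∑ i ∈ Λ, ∑ a, radSign A a * centInd (c i (T j)) a|
        - (∑ t, |∑ i ∈ Λ, ∑ a, radSign A a * centInd (c i t) a|) / Fintype.card (Fin m)))
    rw [hMc, ← mul_sum, le_div_iff₀ hM0] at h2
    have h3 : l * (n * L * ε / 40) ≤ (l * ∑ A : Finset F, ∑ j,
      (|∑ i ∈ Λ, ∑ a, radSign A a * centInd (c i (T j)) a|
        - (∑ t, |∑ i ∈ Λ, ∑ a, radSign A a * centInd (c i t) a|) / Fintype.card (Fin m))) / M := by
      rw [le_div_iff₀ hM0, mul_assoc]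
      refine mul_le_mul_of_nonneg_left ?_ hl0
      rw [mul_comm]; exact h1
    calc M * Real.exp (l * (n * L * ε / 40)) ≤ _ := by
          rw [mul_comm]
          exact (mul_le_mul_of_nonneg_right (Real.exp_le_exp.2 h3) hM0.le).trans h2
      _ ≤ _ := sum_le_sum fun A _ => exp_le_supExp (fun Λ => l * ∑ j,
          (|∑ i ∈ Λ, ∑ a, radSign A a * centInd (c i (T j)) a|
          - (∑ t, |∑ i ∈ Λ, ∑ a, radSign A a * centInd (c i t) a|) / Fintype.card (Fin m)))
          (by simp [mem_powersetCard, hΛ])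
  have htot : #B * (M * Real.exp (l * (n * L * ε / 40)))
      ≤ M * (N * ((m : ℝ) ^ n * Real.exp (8 * n * l ^ 2 * L ^ 2))) := by
    calc #B * (M * Real.exp (l * (n * L * ε / 40))) ≤ ∑ T ∈ B, ∑ A, Z A T := by
          have := card_nsmul_le_sum B _ _ hbad
          rwa [nsmul_eq_mul] at this
      _ ≤ ∑ T, ∑ A, Z A T :=
          sum_le_sum_of_subset_of_nonneg (subset_univ _) fun T _ _ =>
            sum_nonneg fun A _ => hZpos A T
      _ = ∑ A, ∑ T, Z A T := sum_comm
      _ ≤ ∑ A : Finset F, N * ((m : ℝ) ^ n * Real.exp (8 * n * l ^ 2 * L ^ 2)) :=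
          sum_le_sum fun A _ => hZsum A
      _ = _ := by rw [sum_const, card_univ, nsmul_eq_mul, hMc]
  have e1 : l * (n * L * ε / 40) = n * ε ^ 2 / 51200 + 8 * n * l ^ 2 * L ^ 2 := by
    rw [hl]; field_simp; ring
  rw [e1, Real.exp_add] at htot
  have hE := Real.exp_pos (8 * n * l ^ 2 * L ^ 2)
  refine le_of_mul_le_mul_right ?_ (mul_pos hM0 hE)
  calc _ = _ := by ring
    _ ≤ _ := htot
    _ = _ := by ring


/-- there is an absolute constant `C' > 0` such that the following holds.  Let
`C = {c_1, …, c_N} ⊆ F^{n'}` be a linear code over the field `F` with `q` elements (`q` a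
prime power, `N ≥ 2`) satisfying, for every `Λ` of `L` indices,
`(1/binom(L,2))·Σ_{i<j ∈ Λ} d(c_i, c_j) ≥ (1 − 1/q)(1 − η)`.  Set
`ε = √(4(1/L + η(1 − 1/L)))`.  Then for every length `n ≥ C'·ln(N)/ε²`, the randomly
punctured code of length `n` (obtained by sampling the `n` coordinates `T = (t_1, …, t_n)`
independently and uniformly from `{1, …, n'}`) is `((1 − 1/q)(1 − ε), L − 1)`-list decodable
(as a multiset, i.e. counting codewords with multiplicity) with probability at least
`1 − 1/N`. -/
theorem stmt14 :
    ∃ C' : ℝ, 0 < C' ∧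
      ∀ (q L N n' : ℕ), 2 ≤ L → 2 ≤ N → 1 ≤ n' →
      ∀ (F : Type) [Field F] [Fintype F] [DecidableEq F], Fintype.card F = q →
      ∀ (η : ℝ), 0 ≤ η → η ≤ 1 →
      ∀ (c : Fin N → Fin n' → F), Function.Injective c →
        (∃ V : Submodule F (Fin n' → F), Set.range c = (V : Set (Fin n' → F))) →
        (∀ Λ : Finset (Fin N), Λ.card = L →
          (1 - 1 / (q : ℝ)) * (1 - η) ≤
            (1 / (L.choose 2) : ℝ) *
              ∑ i ∈ Λ, ∑ j ∈ Λ.filter (fun j => i < j), relDist (c i) (c j)) →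
      ∀ ε : ℝ, ε = Real.sqrt (4 * (1 / L + η * (1 - 1 / L))) →
      ∀ n : ℕ, C' * Real.log N / ε ^ 2 ≤ n →
        1 - 1 / (N : ℝ) ≤
          ((Finset.univ.filter fun T : Fin n → Fin n' =>
              ∀ w : Fin n → F,
                (Finset.univ.filter fun i : Fin N =>
                  relDist (fun j => c i (T j)) w ≤ (1 - 1 / (q : ℝ)) * (1 - ε)).card
                  ≤ L - 1).card : ℝ) /
            (Fintype.card (Fin n → Fin n') : ℝ) := by
  refine ⟨102400, by norm_num, ?_⟩
  intro q L N m hL hN hm F _ _ _ hq η hη0 _ c _ _ hd ε hε n hn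
  subst hq
  have hL1 : (1 : ℝ) ≤ L := by exact_mod_cast (by omega : 1 ≤ L)
  have hN0 : (0 : ℝ) < N := by exact_mod_cast (by omega : 0 < N)
  have hN1 : (1 : ℝ) < N := by exact_mod_cast (by omega : 1 < N)
  have hm0 : (0 : ℝ) < m := by exact_mod_cast hm
  have hpos : 0 < 1 / (L : ℝ) + η * (1 - 1 / L) := by
    have h1 : 0 < 1 / (L : ℝ) := by positivity
    have h2 : 1 / (L : ℝ) ≤ 1 := by rw [div_le_one (by positivity)]; exact hL1
    have := mul_nonneg hη0 (sub_nonneg.2 h2)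
    linarith
  have hε2 : ε ^ 2 = 4 * (1 / L + η * (1 - 1 / L)) := by
    rw [hε]; exact Real.sq_sqrt (by linarith)
  have hε0 : 0 ≤ ε := by rw [hε]; exact Real.sqrt_nonneg _
  have hε2pos : 0 < ε ^ 2 := by rw [hε2]; linarith
  have hlog : 0 < Real.log N := Real.log_pos hN1
  have hn1 : 1 ≤ n := by
    have : (0 : ℝ) < n := lt_of_lt_of_le (by positivity) hn
    exact_mod_cast this
  rw [div_le_iff₀ hε2pos] at hn
  set P : (Fin n → Fin m) → Prop := fun T => ∀ w : Fin n → F,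
    (Finset.univ.filter fun i : Fin N =>
      relDist (fun j => c i (T j)) w ≤ (1 - 1 / (Fintype.card F : ℝ)) * (1 - ε)).card ≤ L - 1
    with hP
  have hbad := bad_card_le hm hn1 (by omega : 1 ≤ L) c hε0
    (fun Λ hΛ => by
      have := johnson_second_moment hm hL c Λ hΛ (hd Λ hΛ)
      rwa [show 1 / (L : ℝ) + η * (1 - 1 / L) = ε ^ 2 / 4 by rw [hε2]; ring] at this)
    (univ.filter fun T => ¬ P T)
    (by
      intro T hT
      have hT' := (mem_filter.1 hT).2
      simp only [hP, not_forall, not_le] at hT'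
      obtain ⟨w, hw⟩ := hT'
      obtain ⟨Λ, hΛs, hΛ⟩ := exists_subset_card_eq (Nat.le_of_pred_lt hw)
      exact ⟨w, Λ, hΛ, fun i hi => (mem_filter.1 (hΛs hi)).2⟩)
  have hexp : (N : ℝ) ^ 2 ≤ Real.exp (n * ε ^ 2 / 51200) := by
    calc (N : ℝ) ^ 2 = Real.exp (2 * Real.log N) := by
          rw [two_mul, Real.exp_add, Real.exp_log hN0, sq]
      _ ≤ _ := Real.exp_le_exp.2 (by linarith)
  have hbad2 : (#(univ.filter fun T => ¬ P T) : ℝ) * N ≤ (m : ℝ) ^ n := by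
    have h1 := (mul_le_mul_of_nonneg_left hexp
      (Nat.cast_nonneg (#(univ.filter fun T => ¬ P T)))).trans hbad
    refine le_of_mul_le_mul_left ?_ hN0
    linarith
  have hsplit : (#(univ.filter fun T => P T) : ℝ) + #(univ.filter fun T => ¬ P T)
      = (m : ℝ) ^ n := by
    have := card_filter_add_card_filter_not (s := (univ : Finset (Fin n → Fin m))) P
    rw [card_univ, Fintype.card_fun, Fintype.card_fin, Fintype.card_fin] at this
    exact_mod_cast this
  have hcard : (Fintype.card (Fin n → Fin m) : ℝ) = (m : ℝ) ^ n := by simp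
  have hmn : (0 : ℝ) < (m : ℝ) ^ n := by positivity
  rw [hcard, le_div_iff₀ hmn]
  have : (#(univ.filter fun T => ¬ P T) : ℝ) ≤ (m : ℝ) ^ n / N := by
    rw [le_div_iff₀ hN0]; exact hbad2
  have e : (1 - 1 / (N : ℝ)) * (m : ℝ) ^ n = (m : ℝ) ^ n - (m : ℝ) ^ n / N := by ring
  rw [e]
  linarith
end
end

section
/- Let q ≥ 2, let C ⊆ F_q^n be a linear code, let δ ∈ [0,1], and let A be the number of codewords c ∈ C whose relative Hamming weight is at most δ. Then for every integer L ≥ 2 and every set Λ of L distinct codewords of C, (1/binom(L,2))·Σ_{i<j ∈ Λ} d(c_i, c_j) ≥ ((L − A)/(L − 1))·δ. -/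
/-!
A linear code looks the same from each of its codewords: around any codeword `c` there are exactly
`A` codewords within relative distance `δ`, because `c' ↦ c - c'` is a bijection of the code taking
`d(c, c')` to the weight of `c - c'`. Hence at least `L - A` of the words of `Λ` are farther than
`δ` from any given `c ∈ Λ`, and the distances from `c` sum to at least `(L - A) * δ`
(`le_sum_relDist`). Summing over the `L` choices of `c` and dividing by `2 * binom(L,2) = L * (L - 1)`
gives the bound.
-/

open Finset
open scoped BigOperators Classical

noncomputable section

/-- Write `A` for the number of codewords of relative weight at most `δ`. The injection
`c' ↦ c - c'` sends the words of `Λ` within distance `δ` of the codeword `c` to such codewords,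
so all but at most `A` words of `Λ` are at distance more than `δ`, and the distances from `c` add up to at least `(|Λ| - A) * δ`. -/
lemma le_sum_relDist {n : ℕ} {F : Type} [Field F] [Fintype F] [DecidableEq F]
    (V : Submodule F (Fin n → F)) {δ : ℝ} (hδ0 : 0 ≤ δ)
    (Λ : Finset (Fin n → F)) (hΛV : ↑Λ ⊆ (V : Set (Fin n → F)))
    {c : Fin n → F} (hc : c ∈ V) :
    ((Λ.card : ℝ) - (Nat.card {c : Fin n → F // c ∈ V ∧ relDist c 0 ≤ δ} : ℕ)) * δ ≤
      ∑ c' ∈ Λ, relDist c c' := by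
  have hnear : (Λ.filter fun c' => relDist c c' ≤ δ).card ≤
      Nat.card {c : Fin n → F // c ∈ V ∧ relDist c 0 ≤ δ} := by
    rw [Nat.card_eq_fintype_card, Fintype.card_subtype]
    refine Finset.card_le_card_of_injOn (fun c' => c - c') ?_ ?_
    · intro c' hc'
      simp only [coe_filter, Set.mem_ofPred_eq] at hc'
      simp only [coe_filter, mem_univ, true_and, Set.mem_ofPred_eq]
      refine ⟨V.sub_mem hc (hΛV hc'.1), ?_⟩
      have : hammingDist (c - c') 0 = hammingDist c c' := by
        rw [hammingDist_zero_right, hammingDist_comm c, hammingDist_eq_hammingNorm,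
          neg_add_eq_sub]
      simpa [relDist, this] using hc'.2
    · intro a _ b _ hab
      exact sub_right_injective hab
  have hsplit := Finset.card_filter_add_card_filter_not (s := Λ) (fun c' => relDist c c' ≤ δ)
  have hfar : ((Λ.filter fun c' => ¬ relDist c c' ≤ δ).card : ℝ) * δ ≤
      ∑ c' ∈ Λ, relDist c c' := by
    calc ((Λ.filter fun c' => ¬ relDist c c' ≤ δ).card : ℝ) * δ
        = ∑ c' ∈ Λ.filter fun c' => ¬ relDist c c' ≤ δ, δ := by
          rw [Finset.sum_const, nsmul_eq_mul]
      _ ≤ ∑ c' ∈ Λ.filter fun c' => ¬ relDist c c' ≤ δ, relDist c c' :=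
          Finset.sum_le_sum fun c' hc' => (not_le.mp (Finset.mem_filter.mp hc').2).le
      _ ≤ ∑ c' ∈ Λ, relDist c c' :=
          Finset.sum_le_sum_of_subset_of_nonneg (Finset.filter_subset _ _)
            fun c' _ _ => by unfold relDist; positivity
  refine le_trans (mul_le_mul_of_nonneg_right ?_ hδ0) hfar
  have h1 : ((Λ.filter fun c' => relDist c c' ≤ δ).card : ℝ) ≤ _ := Nat.cast_le.mpr hnear
  have h2 : ((Λ.filter fun c' => relDist c c' ≤ δ).card : ℝ) +
      ((Λ.filter fun c' => ¬ relDist c c' ≤ δ).card : ℝ) = Λ.card := by exact_mod_cast hsplit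
  linarith

/-- let `C` be a linear code (an `F`-subspace `V` of `F^n`, where `F` is the
field with `q` elements, `q ≥ 2`), let `δ ∈ [0,1]`, and let `A` be the number of codewords of
relative Hamming weight at most `δ`.  Then for every `L ≥ 2` and every set `Λ` of `L`
distinct codewords, the average pairwise relative distance
`(1/binom(L,2))·Σ_{i<j ∈ Λ} d(c_i, c_j)` (written via the symmetric double sum, divided
by `2`) is at least `((L − A)/(L − 1))·δ`. -/
theorem stmt15 (q n : ℕ) (hq : 2 ≤ q) (hn : 1 ≤ n)
    (F : Type) [Field F] [Fintype F] [DecidableEq F] (hF : Fintype.card F = q)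
    (V : Submodule F (Fin n → F)) (δ : ℝ) (hδ0 : 0 ≤ δ) (hδ1 : δ ≤ 1)
    (A : ℕ) (hA : A = Nat.card {c : Fin n → F // c ∈ V ∧ relDist c 0 ≤ δ})
    (L : ℕ) (hL : 2 ≤ L)
    (Λ : Finset (Fin n → F)) (hΛV : ↑Λ ⊆ (V : Set (Fin n → F))) (hΛL : Λ.card = L) :
    ((L : ℝ) - A) / ((L : ℝ) - 1) * δ ≤
      (1 / (L.choose 2) : ℝ) * ((∑ c ∈ Λ, ∑ c' ∈ Λ, relDist c c') / 2) := by
  have hsum : (L : ℝ) * (((L : ℝ) - A) * δ) ≤ ∑ c ∈ Λ, ∑ c' ∈ Λ, relDist c c' := by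
    have h := Finset.card_nsmul_le_sum Λ (fun c => ∑ c' ∈ Λ, relDist c c')
      (((L : ℝ) - A) * δ) fun c hc => by
        rw [hA, ← hΛL]
        exact le_sum_relDist V hδ0 Λ hΛV (hΛV hc)
    rwa [nsmul_eq_mul, hΛL] at h
  have hL' : (2 : ℝ) ≤ L := by exact_mod_cast hL
  have hL0 : (0 : ℝ) < L := by linarith
  have hL1 : (0 : ℝ) < (L : ℝ) - 1 := by linarith
  rw [Nat.cast_choose_two]
  calc ((L : ℝ) - A) / ((L : ℝ) - 1) * δ
      = 1 / ((L : ℝ) * (L - 1) / 2) * ((L : ℝ) * (((L : ℝ) - A) * δ) / 2) := by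
        field_simp
    _ ≤ _ := by gcongr
end
end

section
/- There is an absolute constant C > 0 such that the following holds. Let 1 ≤ r ≤ m be integers and let RM(r,m) ⊆ F_2^{2^m} be the binary Reed–Muller code of order r, i.e., the set of evaluation vectors over all points of F_2^m of m-variate polynomials over F_2 of total degree at most r. Let ε ∈ (0, 1/4), let A be the number of codewords of RM(r,m) of relative Hamming weight at most (1/2)(1 − ε²), assume A ≥ 2, and set L = ⌈A/ε²⌉. Then for every integer n ≥ C·ln|RM(r,m)|/ε², the randomly punctured code E of length n obtained from RM(r,m) is ((1/2)(1 − 4ε), L − 1)-list decodable with probability at least 1 − 1/|RM(r,m)|. -/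
/-!
Write `χ_f = (-1)^f` and, for a list `Λ` of `L` codewords, `S_Λ = ∑ f ∈ Λ, χ_f`. If a received word
has `L` codewords of the punctured code within relative distance `(1 - 4ε)/2`, then
`∑ j, |S_Λ(t_j)| ≥ 4 ε n L` for some list `Λ` (`exists_list_of_card_ge`). It thus suffices to bound
the probability that such a `Λ` exists.

For a single `Λ` and a uniform point `t`, linearity of the code gives
`E S_Λ(t)² ≤ L (A + L ε²) ≤ 2 (ε L)²`, so `E |S_Λ(t)| ≤ (3/2) ε L` (`mean_bound`). By Markov's
inequality at least half of all samples `T'` satisfy `∑ j, |S_Λ(t'_j)| ≤ 3 ε n L`. Hence the failure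
probability is at most twice the probability that two independent samples have, for some `Λ`, sums
differing by at least `ε n L` (`bad_bound`). Random exchanges of the coordinates of the two samples
introduce random signs `σ_j` (`ghost`), and the contraction principle (`contraction`) replaces
`∑ j, σ_j |S_Λ(t_j)|` by the linear expression `∑ j, σ_j S_Λ(t_j)`. If the latter is at least
`ε n L / 2`, then `∑ j, σ_j χ_f(t_j) ≥ ε n / 2` for some single codeword `f`, and Hoeffding's
inequality with a union bound over the `N` codewords gives the total `4 N exp (-ε² n / 8)`.
-/

open Finset
open scoped BigOperators Classical

noncomputable section

/-- The relative Hamming distance between two words indexed by the finite type `ι`. -/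
def relDistOn {ι : Type*} [Fintype ι] {α : Type*} [DecidableEq α] (x y : ι → α) : ℝ :=
  (hammingDist x y : ℝ) / Fintype.card ι

/-- The binary Reed–Muller code `RM(r,m)`: the set of evaluation vectors, over all points of
`F_2^m`, of `m`-variate polynomials over `F_2` of total degree at most `r`. -/
def RMcode (r m : ℕ) : Set ((Fin m → ZMod 2) → ZMod 2) :=
  {f | ∃ P : MvPolynomial (Fin m) (ZMod 2),
    P.totalDegree ≤ r ∧ ∀ v : Fin m → ZMod 2, f v = MvPolynomial.eval v P}

/-! ### Rademacher sums over lists -/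

/-- The real sign attached to a bit. -/
def bitSign (b : Bool) : ℝ := if b then 1 else -1

/-- One coordinate of the contraction principle. If some `i` satisfies the left condition with the
sign `-1`, it satisfies the right condition with both signs; with the sign `+1`, it does so with
the sign of `y i`. -/
lemma contraction_step {I : Type*} (b y : I → ℝ) :
    ∑ s : Bool, (if ∃ i, 0 ≤ b i + bitSign s * |y i| then (1 : ℝ) else 0)
      ≤ ∑ s : Bool, (if ∃ i, 0 ≤ b i + bitSign s * y i then (1 : ℝ) else 0) := by
  simp only [Fintype.sum_bool, bitSign, if_true, Bool.false_eq_true, if_false]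
  by_cases h : ∃ i, 0 ≤ b i + -1 * |y i|
  · obtain ⟨i, hi⟩ := h
    have h1 : ∃ i, 0 ≤ b i + 1 * y i := ⟨i, by linarith [neg_abs_le (y i)]⟩
    have h2 : ∃ i, 0 ≤ b i + -1 * y i := ⟨i, by linarith [le_abs_self (y i)]⟩
    rw [if_pos h1, if_pos h2]
    split_ifs <;> norm_num
  · rw [if_neg h]
    by_cases h' : ∃ i, 0 ≤ b i + 1 * |y i|
    · obtain ⟨i, hi⟩ := h'
      rcases abs_cases (y i) with hy | hy
      · have h1 : ∃ i, 0 ≤ b i + 1 * y i := ⟨i, by linarith⟩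
        rw [if_pos h1]
        split_ifs <;> norm_num
      · have h1 : ∃ i, 0 ≤ b i + -1 * y i := ⟨i, by linarith⟩
        rw [if_pos h1]
        split_ifs <;> norm_num
    · rw [if_neg h']
      split_ifs <;> norm_num

/-- Contraction principle for the absolute value, for the event that a supremum of Rademacher sums
is nonnegative: dropping the absolute values can only make the event more likely. -/
lemma contraction_s16 {I : Type*} (n : ℕ) : ∀ (a : I → ℝ) (x : I → Fin n → ℝ),
    ∑ σ : Fin n → Bool, (if ∃ i, 0 ≤ a i + ∑ j, bitSign (σ j) * |x i j| then (1 : ℝ) else 0)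
      ≤ ∑ σ : Fin n → Bool, (if ∃ i, 0 ≤ a i + ∑ j, bitSign (σ j) * x i j then (1 : ℝ) else 0) := by
  induction n with
  | zero => intro a x; simp
  | succ n ih =>
    intro a x
    rw [← (Fin.consEquiv fun _ : Fin (n + 1) => Bool).sum_comp,
      ← (Fin.consEquiv fun _ : Fin (n + 1) => Bool).sum_comp, Fintype.sum_prod_type,
      Fintype.sum_prod_type]
    simp only [Fin.consEquiv_apply, Fin.sum_univ_succ, Fin.cons_zero, Fin.cons_succ]
    calc _ ≤ ∑ s : Bool, ∑ σ : Fin n → Bool,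
          (if ∃ i, 0 ≤ (a i + ∑ j : Fin n, bitSign (σ j) * x i j.succ) + bitSign s * |x i 0|
            then (1 : ℝ) else 0) := by
          refine Finset.sum_le_sum fun s _ => ?_
          have := ih (fun i => a i + bitSign s * |x i 0|) (fun i j => x i j.succ)
          simp only [add_assoc] at this ⊢
          refine this.trans (le_of_eq ?_)
          refine Finset.sum_congr rfl fun σ _ => ?_
          simp only [add_comm (bitSign s * |x _ 0|)]
      _ ≤ _ := by
          rw [Finset.sum_comm]
          refine (Finset.sum_le_sum fun σ _ => contraction_step _ _).trans (le_of_eq ?_)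
          rw [Finset.sum_comm]
          refine Finset.sum_congr rfl fun s _ => Finset.sum_congr rfl fun σ _ => ?_
          simp only [add_assoc, add_comm (bitSign s * x _ 0)]

/-- Hoeffding's inequality for Rademacher sums, as a count of sign patterns. -/
lemma hoeffding_signs (n : ℕ) (a : Fin n → ℝ) (ha : ∀ j, |a j| ≤ 1) (l : ℝ) (hl : 0 ≤ l) :
    ∑ σ : Fin n → Bool, (if l * n ≤ ∑ j, bitSign (σ j) * a j then (1 : ℝ) else 0)
      ≤ 2 ^ n * Real.exp (-(l ^ 2 * n / 2)) := by
  calc _ ≤ ∑ σ : Fin n → Bool,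
          Real.exp (-(l ^ 2 * n)) * ∏ j, Real.exp (l * (bitSign (σ j) * a j)) := by
        refine Finset.sum_le_sum fun σ _ => ?_
        rw [← Real.exp_sum, ← Real.exp_add, ← Finset.mul_sum]
        split_ifs with h
        · rw [Real.one_le_exp_iff]
          nlinarith
        · positivity
    _ = Real.exp (-(l ^ 2 * n)) * ∏ j, (2 * Real.cosh (l * a j)) := by
        rw [← Finset.mul_sum, ← Fintype.prod_sum (fun j s => Real.exp (l * (bitSign s * a j)))]
        congr 1
        refine Finset.prod_congr rfl fun j _ => ?_
        rw [Real.cosh_eq]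
        simp [bitSign]
        ring
    _ ≤ Real.exp (-(l ^ 2 * n)) * ∏ j : Fin n, (2 * Real.exp (l ^ 2 / 2)) := by
        gcongr with j
        · refine (Real.cosh_le_exp_half_sq _).trans (Real.exp_le_exp.2 ?_)
          rw [mul_pow]
          have : a j ^ 2 ≤ 1 := by rw [← sq_abs]; exact pow_le_one₀ (abs_nonneg _) (ha j)
          nlinarith [sq_nonneg l]
    _ = _ := by
        rw [Finset.prod_const, Finset.card_univ, Fintype.card_fin, mul_pow, ← Real.exp_nat_mul,
          mul_left_comm, ← Real.exp_add]
        congr 2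
        ring

/-- For a fixed sample `T`, few sign patterns give some list of size `L` a large signed sum of
`|∑ f ∈ Λ, χ f (T j)|`. After contraction a large list sum forces a large sum for one of its members,
so the union bound runs over the codewords and not over the lists. -/
lemma rademacher_lists {κ V : Type*} (C : Finset κ) (χ : κ → V → ℝ) (hχ : ∀ f v, |χ f v| ≤ 1)
    (L : ℕ) (hL : 0 < L) (n : ℕ) (T : Fin n → V) (l : ℝ) (hl : 0 ≤ l) :
    ∑ σ : Fin n → Bool, (if ∃ Λ ⊆ C, Λ.card = L ∧
        l * n * L ≤ ∑ j, bitSign (σ j) * |∑ f ∈ Λ, χ f (T j)| then (1 : ℝ) else 0)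
      ≤ C.card * (2 ^ n * Real.exp (-(l ^ 2 * n / 2))) := by
  have h := contraction_s16 (I := {Λ : Finset κ // Λ ⊆ C ∧ Λ.card = L}) n
    (fun _ => -(l * n * L)) (fun Λ j => ∑ f ∈ Λ.1, χ f (T j))
  refine le_trans (le_trans (le_of_eq ?_) h) ?_
  · refine Finset.sum_congr rfl fun σ _ => ?_
    refine if_congr ?_ rfl rfl
    simp only [Subtype.exists, le_neg_add_iff_add_le, add_zero, exists_prop, and_assoc]
  calc _ ≤ ∑ σ : Fin n → Bool, ∑ f ∈ C,
          (if l * n ≤ ∑ j, bitSign (σ j) * χ f (T j) then (1 : ℝ) else 0) := by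
        refine Finset.sum_le_sum fun σ _ => ?_
        split_ifs with hσ
        · obtain ⟨⟨Λ, hΛC, hΛL⟩, hs⟩ := hσ
          have hs' : ∑ f ∈ Λ, l * n ≤ ∑ f ∈ Λ, ∑ j, bitSign (σ j) * χ f (T j) := by
            rw [Finset.sum_comm, Finset.sum_const, hΛL, nsmul_eq_mul]
            simp only [Finset.mul_sum] at hs
            linarith
          obtain ⟨f, hf, hfl⟩ := Finset.exists_le_of_sum_le
            (Finset.card_pos.1 (hΛL ▸ hL)) hs'
          calc (1 : ℝ) = if l * n ≤ ∑ j, bitSign (σ j) * χ f (T j) then (1 : ℝ) else 0 := by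
                rw [if_pos hfl]
            _ ≤ _ := Finset.single_le_sum (f := fun f =>
                if l * n ≤ ∑ j, bitSign (σ j) * χ f (T j) then (1 : ℝ) else 0)
                (fun f _ => by positivity) (hΛC hf)
        · exact Finset.sum_nonneg fun f _ => by positivity
    _ ≤ _ := by
        rw [Finset.sum_comm, ← nsmul_eq_mul]
        exact Finset.sum_le_card_nsmul _ _ _ fun f _ =>
          hoeffding_signs n _ (fun j => hχ f (T j)) l hl

/-- Markov's inequality: at least half of the samples have empirical sum at most twice the bound
`μ n` on the mean. -/
lemma half_good {V : Type*} [Fintype V] [Nonempty V] (n : ℕ) (hn : 0 < n) (g : V → ℝ)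
    (hg : ∀ v, 0 ≤ g v) (μ : ℝ) (hμ : 0 < μ) (h : ∑ v, g v ≤ μ * Fintype.card V) :
    (Fintype.card V : ℝ) ^ n / 2 ≤
      ∑ T : Fin n → V, (if ∑ j, g (T j) ≤ 2 * μ * n then (1 : ℝ) else 0) := by
  have hsum : ∑ T : Fin n → V, ∑ j, g (T j) ≤ n * μ * (Fintype.card V : ℝ) ^ n := by
    rw [Finset.sum_comm]
    have key : ∀ j : Fin n, ∑ T : Fin n → V, g (T j) ≤ μ * (Fintype.card V : ℝ) ^ n := by
      intro j
      have := Fintype.sum_piFinset_apply (κ := V) (ι := Fin n) g Finset.univ j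
      rw [Fintype.piFinset_univ] at this
      rw [this, Fintype.card_fin, Finset.card_univ, nsmul_eq_mul, Nat.cast_pow]
      calc _ ≤ (Fintype.card V : ℝ) ^ (n - 1) * (μ * Fintype.card V) := by gcongr
        _ = μ * ((Fintype.card V : ℝ) ^ (n - 1) * Fintype.card V) := by ring
        _ = _ := by rw [← pow_succ, Nat.sub_add_cancel hn]
    refine (Finset.sum_le_card_nsmul _ _ _ fun j _ => key j).trans (le_of_eq ?_)
    rw [Finset.card_univ, Fintype.card_fin, nsmul_eq_mul, mul_assoc]
  have hn' : (0 : ℝ) < n := by exact_mod_cast hn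
  have hpt : ∀ T : Fin n → V, 2 * μ * n * (1 - (if ∑ j, g (T j) ≤ 2 * μ * n then (1 : ℝ) else 0))
      ≤ ∑ j, g (T j) := by
    intro T
    split_ifs with hT
    · simpa using Finset.sum_nonneg fun j _ => hg (T j)
    · linarith
  have h2 := Finset.sum_le_sum fun T (_ : T ∈ Finset.univ) => hpt T
  rw [← Finset.mul_sum, Finset.sum_sub_distrib, Finset.sum_const, Finset.card_univ,
    Fintype.card_fun, Fintype.card_fin, nsmul_eq_mul, mul_one, Nat.cast_pow] at h2
  have h3 : 2 * μ * n * ((Fintype.card V : ℝ) ^ n -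
      ∑ T : Fin n → V, (if ∑ j, g (T j) ≤ 2 * μ * n then (1 : ℝ) else 0))
      ≤ 2 * μ * n * ((Fintype.card V : ℝ) ^ n / 2) := by
    refine (h2.trans hsum).trans (le_of_eq (by ring))
  have h4 := le_of_mul_le_mul_left h3 (by positivity)
  linarith

/-- The permutation of pairs of samples that exchanges the coordinates `j` with `σ j = false`. -/
def swapEquiv {V : Type*} {n : ℕ} (σ : Fin n → Bool) :
    ((Fin n → V) × (Fin n → V)) ≃ ((Fin n → V) × (Fin n → V)) :=
  Function.Involutive.toPerm
    (fun p => (fun j => if σ j then p.1 j else p.2 j, fun j => if σ j then p.2 j else p.1 j))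
    (by
      rintro ⟨T, U⟩
      ext j <;> dsimp only <;> split_ifs <;> rfl)

/-! ### Symmetrization -/

/-- Few pairs of samples have empirical sums that differ much on some list: exchanging coordinates
according to `σ` preserves the count, so it may be averaged over `σ`, and a large signed difference
makes the signed sum of one of the two samples large. -/
lemma ghost {κ V : Type*} [Fintype V] [Nonempty V]
    (C : Finset κ) (χ : κ → V → ℝ) (hχ : ∀ f v, |χ f v| ≤ 1)
    (L : ℕ) (hL : 0 < L) (n : ℕ) (l : ℝ) (hl : 0 ≤ l) :
    ∑ p : (Fin n → V) × (Fin n → V), (if ∃ Λ ⊆ C, Λ.card = L ∧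
        2 * l * n * L ≤ ∑ j, (|∑ f ∈ Λ, χ f (p.1 j)| - |∑ f ∈ Λ, χ f (p.2 j)|)
        then (1 : ℝ) else 0)
      ≤ 2 * C.card * Real.exp (-(l ^ 2 * n / 2)) * ((Fintype.card V : ℝ) ^ n) ^ 2 := by
  set D : Finset κ → (Fin n → V) × (Fin n → V) → (Fin n → Bool) → ℝ := fun Λ p σ =>
    ∑ j, bitSign (σ j) * (|∑ f ∈ Λ, χ f (p.1 j)| - |∑ f ∈ Λ, χ f (p.2 j)|) with hD
  set R : (Fin n → V) → (Fin n → Bool) → ℝ := fun T σ =>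
    if ∃ Λ ⊆ C, Λ.card = L ∧
        l * n * L ≤ ∑ j, bitSign (σ j) * |∑ f ∈ Λ, χ f (T j)| then (1 : ℝ) else 0 with hR
  set B := (C.card : ℝ) * (2 ^ n * Real.exp (-(l ^ 2 * n / 2))) with hB
  have hRB : ∀ T, ∑ σ, R T σ ≤ B := fun T => rademacher_lists C χ hχ L hL n T l hl
  have hRB' : ∀ T, ∑ σ : Fin n → Bool, R T (fun j => !σ j) ≤ B := by
    intro T
    refine le_trans (le_of_eq ?_) (hRB T)
    exact (Equiv.piCongrRight fun _ : Fin n => Equiv.boolNot).sum_comp (R T)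
  have hswap : ∀ σ : Fin n → Bool,
      ∑ p : (Fin n → V) × (Fin n → V), (if ∃ Λ ⊆ C, Λ.card = L ∧
        2 * l * n * L ≤ ∑ j, (|∑ f ∈ Λ, χ f (p.1 j)| - |∑ f ∈ Λ, χ f (p.2 j)|)
        then (1 : ℝ) else 0)
      = ∑ p : (Fin n → V) × (Fin n → V), (if ∃ Λ ⊆ C, Λ.card = L ∧
        2 * l * n * L ≤ D Λ p σ then (1 : ℝ) else 0) := by
    intro σ
    rw [← (swapEquiv σ).sum_comp]
    refine Finset.sum_congr rfl fun p _ => ?_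
    have : ∀ Λ, ∑ j, (|∑ f ∈ Λ, χ f ((swapEquiv σ p).1 j)| - |∑ f ∈ Λ, χ f ((swapEquiv σ p).2 j)|)
        = D Λ p σ := by
      intro Λ
      refine Finset.sum_congr rfl fun j _ => ?_
      change |∑ f ∈ Λ, χ f (if σ j then p.1 j else p.2 j)| -
        |∑ f ∈ Λ, χ f (if σ j then p.2 j else p.1 j)| = _
      cases σ j <;> simp [bitSign]
    simp only [this]
  have hpt : ∀ σ p, (if ∃ Λ ⊆ C, Λ.card = L ∧ 2 * l * n * L ≤ D Λ p σ then (1 : ℝ) else 0)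
      ≤ R p.1 σ + R p.2 (fun j => !σ j) := by
    intro σ p
    have hR0 : ∀ T σ, 0 ≤ R T σ := fun T σ => by simp only [hR]; positivity
    split_ifs with h
    · obtain ⟨Λ, hC, hc, hle⟩ := h
      have hsplit : D Λ p σ = ∑ j, bitSign (σ j) * |∑ f ∈ Λ, χ f (p.1 j)| +
          ∑ j, bitSign (!σ j) * |∑ f ∈ Λ, χ f (p.2 j)| := by
        rw [← Finset.sum_add_distrib]
        refine Finset.sum_congr rfl fun j _ => ?_
        cases σ j <;> simp [bitSign] <;> ring
      by_cases h1 : l * n * L ≤ ∑ j, bitSign (σ j) * |∑ f ∈ Λ, χ f (p.1 j)|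
      · have : R p.1 σ = 1 := if_pos ⟨Λ, hC, hc, h1⟩
        linarith [hR0 p.2 (fun j => !σ j)]
      · have : R p.2 (fun j => !σ j) = 1 := if_pos ⟨Λ, hC, hc, by linarith⟩
        linarith [hR0 p.1 σ]
    · exact add_nonneg (hR0 _ _) (hR0 _ _)
  have h2n : (0 : ℝ) < 2 ^ n := by positivity
  refine le_of_mul_le_mul_left ?_ h2n
  calc _ = ∑ σ : Fin n → Bool, ∑ p : (Fin n → V) × (Fin n → V), (if ∃ Λ ⊆ C, Λ.card = L ∧
        2 * l * n * L ≤ D Λ p σ then (1 : ℝ) else 0) := by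
        simp only [← hswap]
        simp
    _ ≤ ∑ σ : Fin n → Bool, ∑ p : (Fin n → V) × (Fin n → V),
          (R p.1 σ + R p.2 (fun j => !σ j)) :=
        Finset.sum_le_sum fun σ _ => Finset.sum_le_sum fun p _ => hpt σ p
    _ = ∑ p : (Fin n → V) × (Fin n → V),
          (∑ σ, R p.1 σ + ∑ σ : Fin n → Bool, R p.2 (fun j => !σ j)) := by
        rw [Finset.sum_comm]
        simp only [Finset.sum_add_distrib]
    _ ≤ ∑ p : (Fin n → V) × (Fin n → V), (B + B) :=
        Finset.sum_le_sum fun p _ => add_le_add (hRB _) (hRB' _)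
    _ = _ := by
        rw [Finset.sum_const, Finset.card_univ, Fintype.card_prod, Fintype.card_fun,
          Fintype.card_fin, nsmul_eq_mul, hB]
        push_cast
        ring

/-- Symmetrization: a sample that is bad for `Λ` makes a bad pair with every sample whose sum over
`Λ` is at most `3 ε n L`, that is, with at least half of all samples. -/
lemma bad_bound {κ V : Type*} [Fintype V] [Nonempty V]
    (C : Finset κ) (χ : κ → V → ℝ) (hχ : ∀ f v, |χ f v| ≤ 1)
    (L : ℕ) (hL : 0 < L) (n : ℕ) (hn : 0 < n) (ε : ℝ) (hε : 0 < ε)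
    (hmean : ∀ Λ ⊆ C, Λ.card = L →
      ∑ v, |∑ f ∈ Λ, χ f v| ≤ 3 / 2 * ε * L * Fintype.card V) :
    ∑ T : Fin n → V, (if ∃ Λ ⊆ C, Λ.card = L ∧
        4 * ε * n * L ≤ ∑ j, |∑ f ∈ Λ, χ f (T j)| then (1 : ℝ) else 0)
      ≤ 4 * C.card * Real.exp (-(ε ^ 2 * n / 8)) * (Fintype.card V : ℝ) ^ n := by
  have hL' : (0 : ℝ) < L := by exact_mod_cast hL
  have hV : (0 : ℝ) < (Fintype.card V : ℝ) ^ n := by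
    have : (0 : ℝ) < Fintype.card V := by exact_mod_cast Fintype.card_pos
    positivity
  have hg := ghost C χ hχ L hL n (ε / 2) (by positivity)
  rw [Fintype.sum_prod_type] at hg
  have hT : ∀ T : Fin n → V, (Fintype.card V : ℝ) ^ n / 2 * (if ∃ Λ ⊆ C, Λ.card = L ∧
        4 * ε * n * L ≤ ∑ j, |∑ f ∈ Λ, χ f (T j)| then (1 : ℝ) else 0) ≤
      ∑ U : Fin n → V, (if ∃ Λ ⊆ C, Λ.card = L ∧
        2 * (ε / 2) * n * L ≤ ∑ j, (|∑ f ∈ Λ, χ f (T j)| - |∑ f ∈ Λ, χ f (U j)|)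
        then (1 : ℝ) else 0) := by
    intro T
    split_ifs with h
    · obtain ⟨Λ, hC, hc, hle⟩ := h
      rw [mul_one]
      refine (half_good n hn (fun v => |∑ f ∈ Λ, χ f v|) (fun v => abs_nonneg _)
        (3 / 2 * ε * L) (by positivity) (hmean Λ hC hc)).trans ?_
      refine Finset.sum_le_sum fun U _ => ?_
      split_ifs with h1 h2 h2
      · exact le_rfl
      · refine absurd ⟨Λ, hC, hc, ?_⟩ h2
        rw [Finset.sum_sub_distrib]
        linarith
      · exact zero_le_one
      · exact le_rfl
    · rw [mul_zero]
      exact Finset.sum_nonneg fun U _ => by positivity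
  have h1 := (Finset.sum_le_sum fun T (_ : T ∈ Finset.univ) => hT T).trans hg
  rw [← Finset.mul_sum] at h1
  refine le_of_mul_le_mul_left (h1.trans (le_of_eq ?_)) (half_pos hV)
  rw [show (ε / 2) ^ 2 * n / 2 = ε ^ 2 * n / 8 by ring]
  ring

/-! ### Lists of codewords -/

/-- The character `(-1)^a` of `F_2`, with real values. -/
def zsign (a : ZMod 2) : ℝ := if a = 0 then 1 else -1

lemma abs_zsign (a : ZMod 2) : |zsign a| = 1 := by
  unfold zsign; split_ifs <;> simp

lemma zsign_mul_zsign (a b : ZMod 2) : zsign a * zsign b = 1 - 2 * (if a ≠ b then 1 else 0) := by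
  have h : ∀ c : ZMod 2, c = 0 ∨ c = 1 := by decide
  rcases h a with rfl | rfl <;> rcases h b with rfl | rfl <;> norm_num [zsign]

lemma sum_zsign_mul {ι : Type*} [Fintype ι] (x y : ι → ZMod 2) :
    ∑ i, zsign (x i) * zsign (y i) = Fintype.card ι - 2 * hammingDist x y := by
  simp only [zsign_mul_zsign, Finset.sum_sub_distrib, ← Finset.mul_sum, Finset.sum_boole,
    Finset.sum_const, Finset.card_univ, nsmul_eq_mul, mul_one]
  simp only [hammingDist]

lemma RMcode_sub {r m : ℕ} {f g : (Fin m → ZMod 2) → ZMod 2} (hf : f ∈ RMcode r m)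
    (hg : g ∈ RMcode r m) : f - g ∈ RMcode r m := by
  obtain ⟨P, hP, hP'⟩ := hf
  obtain ⟨Q, hQ, hQ'⟩ := hg
  exact ⟨P - Q, (MvPolynomial.totalDegree_sub P Q).trans (max_le hP hQ), fun v => by
    simp [hP', hQ']⟩

/-- In a linear code every word `f` of a list has at most `A` list members within relative distance
`(1 - ε²)/2`, and each of the other members has correlation at most `ε²` with `f`. -/
lemma corr_bound {V : Type*} [Fintype V] [Nonempty V] (C : Finset (V → ZMod 2))
    (hsub : ∀ f ∈ C, ∀ g ∈ C, f - g ∈ C) (ε : ℝ) (A : ℕ)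
    (hA : (C.filter fun f => relDistOn f 0 ≤ (1 / 2) * (1 - ε ^ 2)).card ≤ A)
    (Λ : Finset (V → ZMod 2)) (hΛ : Λ ⊆ C) (f : V → ZMod 2) (hf : f ∈ Λ) :
    ∑ g ∈ Λ, ∑ v, zsign (f v) * zsign (g v) ≤ (A + Λ.card * ε ^ 2) * Fintype.card V := by
  have hV : (0 : ℝ) < Fintype.card V := by exact_mod_cast Fintype.card_pos
  set close : Finset (V → ZMod 2) :=
    Λ.filter fun g => relDistOn (f - g) 0 ≤ (1 / 2) * (1 - ε ^ 2) with hclose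
  have hcard : close.card ≤ A := by
    refine le_trans (Finset.card_le_card_of_injOn (fun g => f - g) ?_ ?_) hA
    · intro g hg
      rw [Finset.mem_coe, hclose, Finset.mem_filter] at hg
      rw [Finset.mem_coe, Finset.mem_filter]
      exact ⟨hsub f (hΛ hf) g (hΛ hg.1), hg.2⟩
    · intro g _ g' _ h
      exact sub_right_injective h
  have hdist : ∀ g : V → ZMod 2, hammingDist (f - g) 0 = hammingDist f g := by
    intro g
    simp [hammingDist, sub_eq_zero]
  have hpt : ∀ g ∈ Λ, ∑ v, zsign (f v) * zsign (g v) ≤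
      ((if relDistOn (f - g) 0 ≤ (1 / 2) * (1 - ε ^ 2) then 1 else 0) + ε ^ 2)
        * Fintype.card V := by
    intro g _
    rw [sum_zsign_mul]
    split_ifs with h
    · have : (0 : ℝ) ≤ hammingDist f g := by positivity
      nlinarith [sq_nonneg ε]
    · rw [relDistOn, hdist, not_le, lt_div_iff₀ hV] at h
      linarith
  refine (Finset.sum_le_sum hpt).trans ?_
  rw [← Finset.sum_mul, Finset.sum_add_distrib, Finset.sum_boole, Finset.sum_const,
    nsmul_eq_mul]
  gcongr

/-- A random point sees a small imbalance in every list of size `L ≥ A / ε²`: the second moment of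
the sign sum is at most `2 (ε L)²`, and `√2 ≤ 3/2`. -/
lemma mean_bound {V : Type*} [Fintype V] [Nonempty V] (C : Finset (V → ZMod 2))
    (hsub : ∀ f ∈ C, ∀ g ∈ C, f - g ∈ C) (ε : ℝ) (hε : 0 < ε) (A L : ℕ)
    (hA : (C.filter fun f => relDistOn f 0 ≤ (1 / 2) * (1 - ε ^ 2)).card ≤ A)
    (hAL : (A : ℝ) ≤ L * ε ^ 2)
    (Λ : Finset (V → ZMod 2)) (hΛ : Λ ⊆ C) (hL : Λ.card = L) :
    ∑ v, |∑ f ∈ Λ, zsign (f v)| ≤ 3 / 2 * ε * L * Fintype.card V := by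
  have hsq : ∑ v, |∑ f ∈ Λ, zsign (f v)| ^ 2 ≤ 2 * (ε * L) ^ 2 * Fintype.card V := by
    calc _ = ∑ f ∈ Λ, ∑ g ∈ Λ, ∑ v, zsign (f v) * zsign (g v) := by
          simp only [sq_abs]
          simp only [sq, Finset.sum_mul_sum]
          rw [Finset.sum_comm]
          exact Finset.sum_congr rfl fun f _ => Finset.sum_comm
      _ ≤ ∑ f ∈ Λ, (L * ε ^ 2 + L * ε ^ 2) * Fintype.card V := by
          refine Finset.sum_le_sum fun f hf =>
            (corr_bound C hsub ε A hA Λ hΛ f hf).trans ?_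
          rw [hL]
          gcongr
      _ = _ := by
          rw [Finset.sum_const, hL, nsmul_eq_mul]
          ring
  have hcs := sq_sum_le_card_mul_sum_sq (s := Finset.univ)
    (f := fun v : V => |∑ f ∈ Λ, zsign (f v)|)
  rw [Finset.card_univ] at hcs
  refine abs_le_of_sq_le_sq' ?_ (by positivity) |>.2
  refine hcs.trans ((mul_le_mul_of_nonneg_left hsq (by positivity)).trans ?_)
  nlinarith [sq_nonneg (ε * L * Fintype.card V)]

/-- A received word `w` with `L` codewords in its ball yields a list whose sign sums are large in
absolute value along `T`; the absolute value removes the dependence on `w`. -/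
lemma exists_list_of_card_ge {V : Type*} [Fintype V] (C : Finset (V → ZMod 2)) (ε : ℝ) (L n : ℕ)
    (hn : 0 < n) (T : Fin n → V) (w : Fin n → ZMod 2)
    (h : L ≤ (C.filter fun f => relDistOn (fun j => f (T j)) w ≤ (1 / 2) * (1 - 4 * ε)).card) :
    ∃ Λ ⊆ C, Λ.card = L ∧ 4 * ε * n * L ≤ ∑ j, |∑ f ∈ Λ, zsign (f (T j))| := by
  obtain ⟨Λ, hΛ, hL⟩ := Finset.exists_subset_card_eq h
  refine ⟨Λ, hΛ.trans (Finset.filter_subset _ _), hL, ?_⟩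
  have hn' : (0 : ℝ) < n := by exact_mod_cast hn
  calc 4 * ε * n * L = ∑ f ∈ Λ, 4 * ε * n := by rw [Finset.sum_const, hL, nsmul_eq_mul]; ring
    _ ≤ ∑ f ∈ Λ, ∑ j, zsign (f (T j)) * zsign (w j) := by
        refine Finset.sum_le_sum fun f hf => ?_
        have hd := (Finset.mem_filter.1 (hΛ hf)).2
        rw [sum_zsign_mul (fun j => f (T j)) w, Fintype.card_fin]
        rw [relDistOn, Fintype.card_fin, div_le_iff₀ hn'] at hd
        linarith
    _ = ∑ j, (∑ f ∈ Λ, zsign (f (T j))) * zsign (w j) := by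
        rw [Finset.sum_comm]
        simp only [Finset.sum_mul]
    _ ≤ _ := by
        refine Finset.sum_le_sum fun j _ => (le_abs_self _).trans ?_
        rw [abs_mul, abs_zsign, mul_one]

/-- there is an absolute constant `C > 0` such that the following holds.  Let
`1 ≤ r ≤ m`, `ε ∈ (0, 1/4)`, let `A ≥ 2` be the number of codewords of `RM(r,m)` of relative
Hamming weight at most `(1/2)(1 − ε²)`, let `N = |RM(r,m)|` and `L = ⌈A/ε²⌉`.  Then for every
length `n ≥ C·ln(N)/ε²`, the randomly punctured code of length `n` (the `n` coordinates, i.e.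
points of `F_2^m`, being drawn independently and uniformly) is `((1/2)(1 − 4ε), L − 1)`-list
decodable (counting codewords with multiplicity) with probability at least `1 − 1/N`. -/
theorem stmt16 :
    ∃ C : ℝ, 0 < C ∧
      ∀ r m : ℕ, 1 ≤ r → r ≤ m →
      ∀ ε : ℝ, 0 < ε → ε < 1 / 4 →
      ∀ A N L : ℕ,
        A = Nat.card {f : (Fin m → ZMod 2) → ZMod 2 //
              f ∈ RMcode r m ∧ relDistOn f 0 ≤ (1 / 2) * (1 - ε ^ 2)} →
        N = Nat.card {f : (Fin m → ZMod 2) → ZMod 2 // f ∈ RMcode r m} →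
        L = ⌈(A : ℝ) / ε ^ 2⌉₊ →
        2 ≤ A →
      ∀ n : ℕ, C * Real.log N / ε ^ 2 ≤ n →
        1 - 1 / (N : ℝ) ≤
          ((Finset.univ.filter fun T : Fin n → (Fin m → ZMod 2) =>
              ∀ w : Fin n → ZMod 2,
                Nat.card {f : (Fin m → ZMod 2) → ZMod 2 //
                    f ∈ RMcode r m ∧
                    relDistOn (fun j => f (T j)) w ≤ (1 / 2) * (1 - 4 * ε)} ≤ L - 1).card : ℝ) /
            (Fintype.card (Fin n → (Fin m → ZMod 2)) : ℝ) := by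

  -- `ε² n / 8 ≥ 4 log N` makes the failure bound `4 N exp (-ε² n / 8)` at most `4 / N³ ≤ 1 / N`.
  refine ⟨32, by norm_num, ?_⟩
  intro r m _ _ ε hε hε4 A N L hA hN hL hA2 n hn
  set C : Finset ((Fin m → ZMod 2) → ZMod 2) := Finset.univ.filter (· ∈ RMcode r m) with hC
  have hcount : ∀ p : ((Fin m → ZMod 2) → ZMod 2) → Prop,
      Nat.card {f // f ∈ RMcode r m ∧ p f} = (C.filter p).card := by
    intro p
    rw [Nat.card_eq_fintype_card, Fintype.card_subtype, hC, Finset.filter_filter]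
  have hNC : N = C.card := by
    rw [hN, Nat.card_eq_fintype_card, Fintype.card_subtype]
  rw [hcount] at hA
  have hN2 : 2 ≤ N := by
    rw [hNC]
    exact hA2.trans (hA ▸ Finset.card_filter_le _ _)
  have hN2' : (2 : ℝ) ≤ N := by exact_mod_cast hN2
  have hAL : (A : ℝ) ≤ L * ε ^ 2 := by
    rw [hL, ← div_le_iff₀ (by positivity)]
    exact Nat.le_ceil _
  have hA0 : (0 : ℝ) < A := by exact_mod_cast (by omega : 0 < A)
  have hL0 : 0 < L := by
    rw [hL, Nat.ceil_pos]
    positivity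
  have hlog : 0 < Real.log N := Real.log_pos (by linarith)
  have hn' : (0 : ℝ) < n := lt_of_lt_of_le (by positivity) hn
  have hn0 : 0 < n := by exact_mod_cast hn'
  have hsub : ∀ f ∈ C, ∀ g ∈ C, f - g ∈ C := by
    intro f hf g hg
    rw [hC, Finset.mem_filter] at hf hg ⊢
    exact ⟨Finset.mem_univ _, RMcode_sub hf.2 hg.2⟩
  have hbad := bad_bound C (fun f v => zsign (f v)) (fun f v => (abs_zsign _).le) L hL0 n hn0 ε hε
    (fun Λ hΛ hc => mean_bound C hsub ε hε A L hA.ge hAL Λ hΛ hc)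
  have hexp : Real.exp (-(ε ^ 2 * n / 8)) ≤ ((N : ℝ) ^ 4)⁻¹ := by
    rw [Real.exp_neg]
    refine inv_anti₀ (by positivity) ?_
    rw [← Real.log_le_iff_le_exp (by positivity), Real.log_pow]
    rw [div_le_iff₀ (by positivity)] at hn
    push_cast
    linarith
  set W : ℝ := (Fintype.card (Fin n → (Fin m → ZMod 2)) : ℝ) with hW
  have hW' : (Fintype.card (Fin m → ZMod 2) : ℝ) ^ n = W := by
    rw [hW, Fintype.card_fun (α := Fin n), Fintype.card_fin, Nat.cast_pow]
  have hW0 : 0 < W := by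
    rw [hW]
    exact_mod_cast Fintype.card_pos
  rw [hW', ← hNC] at hbad
  have hsmall : 4 * (N : ℝ) * Real.exp (-(ε ^ 2 * n / 8)) ≤ 1 / N := by
    refine (mul_le_mul_of_nonneg_left hexp (by positivity)).trans ?_
    rw [← div_eq_mul_inv, div_le_div_iff₀ (by positivity) (by positivity)]
    have h4 : (4 : ℝ) ≤ N ^ 2 := by nlinarith
    nlinarith [mul_le_mul_of_nonneg_left h4 (sq_nonneg (N : ℝ))]
  rw [le_div_iff₀ hW0, ← Finset.sum_boole]
  have hpt : ∀ T : Fin n → (Fin m → ZMod 2),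
      1 - (if ∃ Λ ⊆ C, Λ.card = L ∧ 4 * ε * n * L ≤ ∑ j, |∑ f ∈ Λ, zsign (f (T j))|
        then (1 : ℝ) else 0) ≤
      if ∀ w : Fin n → ZMod 2, Nat.card {f : (Fin m → ZMod 2) → ZMod 2 // f ∈ RMcode r m ∧
          relDistOn (fun j => f (T j)) w ≤ (1 / 2) * (1 - 4 * ε)} ≤ L - 1 then (1 : ℝ) else 0 := by
    intro T
    by_cases hg : ∀ w : Fin n → ZMod 2,
        Nat.card {f : (Fin m → ZMod 2) → ZMod 2 // f ∈ RMcode r m ∧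
          relDistOn (fun j => f (T j)) w ≤ (1 / 2) * (1 - 4 * ε)} ≤ L - 1
    · rw [if_pos hg]
      split_ifs <;> norm_num
    · rw [if_neg hg]
      push Not at hg
      obtain ⟨w, hw⟩ := hg
      rw [hcount] at hw
      rw [if_pos (exists_list_of_card_ge C ε L n hn0 T w (by omega))]
      norm_num
  refine le_trans ?_ (Finset.sum_le_sum fun T _ => hpt T)
  rw [Finset.sum_sub_distrib, Finset.sum_const, Finset.card_univ, nsmul_eq_mul, mul_one, ← hW]
  have := mul_le_mul_of_nonneg_right hsmall hW0.le
  linarith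
end
end

section
/- Let q be a prime power, k ≤ n, ρ ∈ [0,1], L ≥ 1, and let p be the probability that the linear code {xG : x ∈ F_q^k} (as a multiset) generated by a uniformly random matrix G ∈ F_q^{k×n} is (ρ, L)-list decodable. Then the probability that a uniformly random k-dimensional linear subspace of F_q^n is (ρ, L)-list decodable is at least p − P[rank(G) < k], where G is uniform in F_q^{k×n}. -/
/-!
A matrix `G` of full rank `k` encodes injectively, so its multiset code is just its row space, a
`k`-dimensional subspace; hence `G` is list decodable exactly when its row space is
(`card_decodingList_eq`). Every `k`-dimensional subspace is the row space of the same number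
`N = ∏_{i<k} (q^k - q^i)` of matrices, namely of its ordered bases (`card_bases`). Thus, with `S`
subspaces of dimension `k`, of which `S'` are list decodable, there are `N * S` full-rank matrices
and `N * S'` list-decodable full-rank ones (`card_fullRank_rowSpace`). Writing `M` for the number
of all matrices, `p - P[rank G < k] ≤ N * S' / M ≤ N * S' / (N * S) = S' / S`.
-/

open Finset
open scoped BigOperators Classical

noncomputable section

/-- The ordered bases of a `k`-dimensional subspace `V`, seen as matrices with row space `V`,
are counted by a number that does not depend on `V`. -/
lemma card_bases {F : Type} [Field F] [Fintype F] {k n : ℕ}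
    (V : Submodule F (Fin n → F)) (hV : Module.finrank F V = k) :
    Nat.card {G : Fin k → Fin n → F //
      LinearIndependent F G ∧ Submodule.span F (Set.range G) = V}
      = ∏ i : Fin k, (Fintype.card F ^ k - Fintype.card F ^ (i : ℕ)) := by
  have h := card_linearIndependent (K := F) (V := V) (k := k) (by rw [hV])
  rw [hV] at h
  rw [← h]
  refine Nat.card_congr
    { toFun := fun G => ⟨fun i => ⟨G.1 i, ?_⟩, ?_⟩
      invFun := fun v => ⟨fun i => (v.1 i : Fin n → F), ?_, ?_⟩
      left_inv := fun G => rfl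
      right_inv := fun v => rfl }
  · exact G.2.2.le (Submodule.subset_span ⟨i, rfl⟩)
  · exact LinearIndependent.of_comp V.subtype G.2.1
  · exact v.2.map' V.subtype (Submodule.ker_subtype V)
  · have hli : LinearIndependent F (fun i => (v.1 i : Fin n → F)) :=
      v.2.map' V.subtype (Submodule.ker_subtype V)
    refine Submodule.eq_of_le_of_finrank_eq ?_ ?_
    · rw [Submodule.span_le]
      rintro _ ⟨i, rfl⟩
      exact (v.1 i).2
    · rw [finrank_span_eq_card hli, hV, Fintype.card_fin]

/-- Summing `card_bases` over the `k`-dimensional subspaces with property `P`. -/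
lemma card_fullRank_rowSpace {F : Type} [Field F] [Fintype F] {k n : ℕ}
    (P : Submodule F (Fin n → F) → Prop) :
    (Finset.univ.filter fun G : Matrix (Fin k) (Fin n) F =>
      LinearIndependent F G.row ∧ P (Submodule.span F (Set.range G.row))).card
      = Nat.card {V : Submodule F (Fin n → F) // Module.finrank F V = k ∧ P V}
        * ∏ i : Fin k, (Fintype.card F ^ k - Fintype.card F ^ (i : ℕ)) := by
  have : Fintype (Submodule F (Fin n → F)) := Fintype.ofFinite _
  rw [Finset.card_eq_sum_card_fiberwise
    (f := fun G : Matrix (Fin k) (Fin n) F => Submodule.span F (Set.range G.row))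
    (t := Finset.univ.filter fun V => Module.finrank F V = k ∧ P V)]
  · rw [Finset.sum_const_nat
      (m := ∏ i : Fin k, (Fintype.card F ^ k - Fintype.card F ^ (i : ℕ)))]
    · rw [Nat.card_eq_fintype_card, Fintype.card_subtype]
    · intro V hV
      simp only [Finset.mem_filter, Finset.mem_univ, true_and] at hV
      rw [← card_bases V hV.1, Nat.card_eq_fintype_card, Fintype.card_subtype,
        Finset.filter_filter]
      refine congrArg Finset.card (Finset.filter_congr fun G _ => ?_)
      constructor
      · rintro ⟨⟨h1, _⟩, h3⟩
        exact ⟨h1, h3⟩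
      · rintro ⟨h1, h3⟩
        exact ⟨⟨h1, h3.symm ▸ hV.2⟩, h3⟩
  · intro G hG
    simp only [Finset.coe_filter, Finset.mem_univ, true_and, Set.mem_ofPred_eq] at hG ⊢
    refine ⟨?_, hG.2⟩
    rw [finrank_span_eq_card hG.1, Fintype.card_fin]

/-- For a full-rank generator matrix, counting messages (that is, codewords with multiplicity)
near `w` is the same as counting elements of the row space near `w`. -/
lemma card_decodingList_eq {F : Type} [Field F] [Fintype F] [DecidableEq F] {k n : ℕ} (ρ : ℝ)
    (G : Matrix (Fin k) (Fin n) F) (hG : LinearIndependent F G.row) (w : Fin n → F) :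
    (Finset.univ.filter fun x : Fin k → F => relDist (Matrix.vecMul x G) w ≤ ρ).card
      = Nat.card {c : Fin n → F //
          c ∈ Submodule.span F (Set.range G.row) ∧ relDist c w ≤ ρ} := by
  have hinj : Function.Injective fun x : Fin k → F => Matrix.vecMul x G :=
    Matrix.vecMul_injective_iff.2 hG
  rw [Nat.card_eq_fintype_card, Fintype.card_subtype, ← Finset.card_image_of_injective _ hinj]
  congr 1
  ext c
  simp only [Finset.mem_image, Finset.mem_filter, Finset.mem_univ, true_and,
    ← range_vecMulLinear, LinearMap.mem_range, Matrix.vecMulLinear_apply]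
  constructor
  · rintro ⟨x, hx, rfl⟩
    exact ⟨⟨x, rfl⟩, hx⟩
  · rintro ⟨⟨x, rfl⟩, hx⟩
    exact ⟨x, hx, rfl⟩

/-- let `F` be the field with `q` elements (`q` a prime power), `k ≤ n`, and let
`p` be the probability that the multiset code `{xG : x ∈ F^k}` generated by a uniformly random
`G ∈ F^{k×n}` is `(ρ, L)`-list decodable (counting codewords with multiplicity).  Then the
probability that a uniformly random `k`-dimensional subspace of `F^n` is `(ρ, L)`-list
decodable is at least `p − P[rank(G) < k]`. -/
theorem stmt17 (q k n L : ℕ) (hk : 1 ≤ k) (hkn : k ≤ n)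
    (ρ : ℝ) (hρ0 : 0 ≤ ρ) (hρ1 : ρ ≤ 1)
    (F : Type) [Field F] [Fintype F] [DecidableEq F] (hq : Fintype.card F = q)
    (p : ℝ)
    (hp : p = ((Finset.univ.filter fun G : Matrix (Fin k) (Fin n) F =>
          ∀ w : Fin n → F,
            (Finset.univ.filter fun x : Fin k → F =>
              relDist (Matrix.vecMul x G) w ≤ ρ).card ≤ L).card : ℝ) /
        (Fintype.card (Matrix (Fin k) (Fin n) F) : ℝ)) :
    p - ((Finset.univ.filter fun G : Matrix (Fin k) (Fin n) F => G.rank < k).card : ℝ) /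
          (Fintype.card (Matrix (Fin k) (Fin n) F) : ℝ)
      ≤ (Nat.card {V : Submodule F (Fin n → F) //
            Module.finrank F V = k ∧
            ∀ w : Fin n → F,
              Nat.card {c : Fin n → F // c ∈ V ∧ relDist c w ≤ ρ} ≤ L} : ℝ) /
          (Nat.card {V : Submodule F (Fin n → F) // Module.finrank F V = k} : ℝ) := by
  set N := ∏ i : Fin k, (Fintype.card F ^ k - Fintype.card F ^ (i : ℕ)) with hN
  set A := Finset.univ.filter fun G : Matrix (Fin k) (Fin n) F =>
    ∀ w : Fin n → F, (Finset.univ.filter fun x : Fin k → F =>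
      relDist (Matrix.vecMul x G) w ≤ ρ).card ≤ L with hA
  set B := Finset.univ.filter fun G : Matrix (Fin k) (Fin n) F => G.rank < k with hB
  set M := Fintype.card (Matrix (Fin k) (Fin n) F) with hM
  set S' := Nat.card {V : Submodule F (Fin n → F) // Module.finrank F V = k ∧
    ∀ w : Fin n → F, Nat.card {c : Fin n → F // c ∈ V ∧ relDist c w ≤ ρ} ≤ L} with hS'
  set S := Nat.card {V : Submodule F (Fin n → F) // Module.finrank F V = k} with hS
  have hgood : (A \ B).card = S' * N := by
    rw [hS', hN, ← card_fullRank_rowSpace (k := k) (fun V : Submodule F (Fin n → F) =>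
      ∀ w : Fin n → F, Nat.card {c : Fin n → F // c ∈ V ∧ relDist c w ≤ ρ} ≤ L)]
    congr 1
    ext G
    have hrank : LinearIndependent F G.row ↔ ¬ G.rank < k := by
      have hle : G.rank ≤ k := G.rank_le_height
      rw [linearIndependent_iff_card_eq_finrank_span, Set.finrank,
        ← Matrix.rank_eq_finrank_span_row, Fintype.card_fin]
      omega
    simp only [hA, hB, Finset.mem_sdiff, Finset.mem_filter, Finset.mem_univ, true_and]
    rw [← hrank, and_comm]
    refine and_congr_right fun hG => forall_congr' fun w => ?_
    rw [← card_decodingList_eq ρ G hG w]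
  have hfull : S * N ≤ M := by
    have h := card_fullRank_rowSpace (F := F) (k := k) (n := n) (fun _ => True)
    simp only [and_true] at h
    rw [hS, hN, ← h]
    exact Finset.card_le_univ _
  have hS'S : S' ≤ S :=
    Nat.card_le_card_of_injective (fun V => ⟨V.1, V.2.1⟩) fun V W h =>
      Subtype.ext (congrArg (fun U => U.1) h)
  have hAB : (A.card : ℝ) - B.card ≤ S' * N := by
    have h : A.card ≤ (A \ B).card + B.card := by
      have := Finset.le_card_sdiff B A
      omega
    rw [hgood] at h
    have h' : (A.card : ℝ) ≤ S' * N + B.card := by exact_mod_cast h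
    linarith
  have hMpos : (0 : ℝ) < M := by
    exact_mod_cast Fintype.card_pos
  rw [hp, ← sub_div]
  rcases Nat.eq_zero_or_pos S with h0 | hpos
  · have h0' : S' = 0 := by omega
    rw [h0'] at hAB ⊢
    simp only [Nat.cast_zero, zero_mul, zero_div] at hAB ⊢
    exact div_nonpos_of_nonpos_of_nonneg hAB hMpos.le
  · have hSpos : (0 : ℝ) < S := by exact_mod_cast hpos
    have hfull' : (S : ℝ) * N ≤ M := by exact_mod_cast hfull
    rw [div_le_div_iff₀ hMpos hSpos]
    calc ((A.card : ℝ) - B.card) * S ≤ S' * N * S := by gcongr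
      _ = S' * (S * N) := by ring
      _ ≤ S' * M := by gcongr
end
end
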